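/- Let f be an orientation-preserving homeomorphism of the plane ℝ². If there exists a smooth structure on S² = ℝ² ⊔ {∞} such that f extends to a C¹ diffeomorphism of S², then f satisfies properties (P1) and (P2). -/

import Mathlib

open MeasureTheory Filter Topology Set Metric

noncomputable section

attribute [local instance] Classical.propDecidable

/-- An isotopy (within homeomorphisms of `X`) from the identity to `f`,
parametrised by `t ∈ [0,1]` (the values for `t ∉ [0,1]` are irrelevant). -/
structure HIsotopy {X : Type*} [TopologicalSpace X] (f : X ≃ₜ X) where
  F : ℝ → X ≃ₜ X
  cont : Continuous fun p : ℝ × X => F p.1 p.2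
  cont_symm : Continuous fun p : ℝ × X => (F p.1).symm p.2
  zero : F 0 = Homeomorph.refl X
  one : F 1 = f

/-- The set of fixed points of a map. -/
def FixPts {X : Type*} (g : X → X) : Set X := {z | g z = z}

/-- The set of positively recurrent points of `f`. -/
def RecPlus (f : ℂ ≃ₜ ℂ) : Set ℂ :=
  {z | ∃ n : ℕ → ℕ, StrictMono n ∧ Tendsto (fun k => (⇑f)^[n k] z) atTop (𝓝 z)}

/-- The total angular variation (number of turns around the origin, i.e. the
integral of the polar-angle form `dθ`) of a continuous path `[0,1] → ℂ ∖ {0}`,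
defined via a continuous lift of the argument (junk value otherwise). -/
def angVar (γ : ℝ → ℂ) : ℝ :=
  if h : ∃ θ : ℝ → ℝ, ContinuousOn θ (Set.Icc 0 1) ∧
      ∀ t ∈ Set.Icc (0 : ℝ) 1, γ t = (‖γ t‖ : ℂ) * Complex.exp ((θ t : ℂ) * Complex.I)
  then (h.choose 1 - h.choose 0) / (2 * Real.pi)
  else 0

/-- `Enlace_I(z,z')`: the integral of `dθ` along `t ↦ f_t(z) - f_t(z')`. -/
def Enlace {f : ℂ ≃ₜ ℂ} (I : HIsotopy f) (z z' : ℂ) : ℝ :=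
  angVar fun t => I.F t z - I.F t z'

/-- `Tourne_I(z)`: the integral of `dθ` along `t ↦ f_t(z)`. -/
def Tourne {f : ℂ ≃ₜ ℂ} (I : HIsotopy f) (z : ℂ) : ℝ :=
  angVar fun t => I.F t z

/-- Property (P1): `Enlace_I` is bounded on pairs of distinct fixed points. -/
def P1 {f : ℂ ≃ₜ ℂ} (I : HIsotopy f) : Prop :=
  ∃ M : ℝ, ∀ z ∈ FixPts ⇑f, ∀ z' ∈ FixPts ⇑f, z ≠ z' → |Enlace I z z'| ≤ M

/-- Property (P2): `Tourne_I` is constant on the fixed points in a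
neighbourhood of infinity (i.e. outside some compact set). -/
def P2 {f : ℂ ≃ₜ ℂ} (I : HIsotopy f) : Prop :=
  ∃ K : Set ℂ, IsCompact K ∧
    ∀ z ∈ FixPts ⇑f \ K, ∀ z' ∈ FixPts ⇑f \ K, Tourne I z = Tourne I z'

/-- An isotopy is adapted if `Tourne_I` vanishes on the fixed points in a
neighbourhood of infinity. -/
def Adapted {f : ℂ ≃ₜ ℂ} (I : HIsotopy f) : Prop :=
  ∃ K : Set ℂ, IsCompact K ∧ ∀ z ∈ FixPts ⇑f \ K, Tourne I z = 0

/-- The orbit of `z` has rotation number `ρ` around `z'` (with respect to the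
isotopy `I`): along every strictly increasing sequence of integers `(n k)` with
`f^[n k] z → z`, the Birkhoff averages of `Enlace I · z'` converge to `ρ`. -/
def HasRot {f : ℂ ≃ₜ ℂ} (I : HIsotopy f) (z' z : ℂ) (ρ : ℝ) : Prop :=
  ∀ n : ℕ → ℕ, StrictMono n → Tendsto (fun k => (⇑f)^[n k] z) atTop (𝓝 z) →
    Tendsto (fun k => (∑ r ∈ Finset.range (n k), Enlace I ((⇑f)^[r] z) z') / (n k : ℝ))
      atTop (𝓝 ρ)

/-- The rotation number `ρ_{z'}(z)` as a function (junk value `0` if it is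
not defined). -/
def rho {f : ℂ ≃ₜ ℂ} (I : HIsotopy f) (z' z : ℂ) : ℝ :=
  if h : ∃ ρ : ℝ, HasRot I z' z ρ then h.choose else 0

/-- A free disc for `f`: an open set homeomorphic to the plane and disjoint
from its image. -/
def FreeDisc (f : ℂ ≃ₜ ℂ) (U : Set ℂ) : Prop :=
  IsOpen U ∧ Nonempty (U ≃ₜ ℂ) ∧ Disjoint (⇑f '' U) U

/-- The first return time `τ_U(z)` to `U` (junk value `0` if the orbit never
returns). -/
def retTime (f : ℂ ≃ₜ ℂ) (U : Set ℂ) (z : ℂ) : ℕ :=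
  sInf {n : ℕ | 0 < n ∧ (⇑f)^[n] z ∈ U}

/-- `γ` is a path in `U` from `x` to `y` (parametrised by `[0,1]`). -/
def IsPathIn (U : Set ℂ) (x y : ℂ) (γ : ℝ → ℂ) : Prop :=
  ContinuousOn γ (Set.Icc 0 1) ∧ (∀ t ∈ Set.Icc (0 : ℝ) 1, γ t ∈ U) ∧ γ 0 = x ∧ γ 1 = y

/-- `α_{U,z'}(z) = Σ_{0 ≤ ℓ < τ_U(z)} Enlace_I(f^ℓ(z),z') + ∫_{γ_{U,z} - z'} dθ`,
where `γ_{U,z}` is a path in `U` joining the first return `F_U(z)` to `z`. -/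
def alphaU {f : ℂ ≃ₜ ℂ} (I : HIsotopy f) (U : Set ℂ) (z' z : ℂ) : ℝ :=
  (∑ ℓ ∈ Finset.range (retTime f U z), Enlace I ((⇑f)^[ℓ] z) z') +
    if h : ∃ γ : ℝ → ℂ, IsPathIn U ((⇑f)^[retTime f U z] z) z γ
    then angVar fun t => h.choose t - z' else 0

/-- `α̂_{U,R}(z) = sup { |α_{U,z'}(z)| : z' ∈ Fix(f), ‖z'‖ ≥ R }`. -/
def alphaHat {f : ℂ ≃ₜ ℂ} (I : HIsotopy f) (U : Set ℂ) (R : ℝ) (z : ℂ) : ℝ :=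
  sSup {a : ℝ | ∃ z' ∈ FixPts ⇑f, R ≤ ‖z'‖ ∧ a = |alphaU I U z' z|}

/-- The (closed) support of a measure. -/
def measSupport {X : Type*} [TopologicalSpace X] {m : MeasurableSpace X}
    (μ : Measure X) : Set X :=
  {x | ∀ U : Set X, IsOpen U → x ∈ U → μ U ≠ 0}

/-- The standard unit sphere `S² ⊂ ℝ³`. -/
notation "𝕊²" => Metric.sphere (0 : EuclideanSpace ℝ (Fin 3)) 1

instance : Fact (Module.finrank ℝ (EuclideanSpace ℝ (Fin 3)) = 3) :=
  ⟨finrank_euclideanSpace_fin⟩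

open Manifold in
/-- `g` is a `C¹` diffeomorphism of the standard sphere. -/
def IsC1SphereDiffeo (g : 𝕊² → 𝕊²) : Prop :=
  Function.Bijective g ∧ ContMDiff (𝓡 2) (𝓡 2) 1 g ∧
    ∃ g' : 𝕊² → 𝕊², Function.LeftInverse g' g ∧ Function.RightInverse g' g ∧
      ContMDiff (𝓡 2) (𝓡 2) 1 g'

/-- `f` extends to a `C¹` diffeomorphism of `S² = ℝ² ⊔ {∞}` for some smooth
structure on `S²`: transporting the extension of `f` to the one-point
compactification through some homeomorphism with the standard sphere yields a
`C¹` diffeomorphism. -/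
def ExtendsToC1SphereDiffeo (f : ℂ ≃ₜ ℂ) : Prop :=
  ∃ φ : OnePoint ℂ ≃ₜ 𝕊², IsC1SphereDiffeo fun x => φ (OnePoint.map (⇑f) (φ.symm x))

/-- The commutator loop `t ↦ [f₁^t, f₂^t] = f₁^t ∘ f₂^t ∘ (f₁^t)⁻¹ ∘ (f₂^t)⁻¹`. -/
def commLoop {X : Type*} [TopologicalSpace X] {f₁ f₂ : X ≃ₜ X}
    (I₁ : HIsotopy f₁) (I₂ : HIsotopy f₂) (t : ℝ) : X ≃ₜ X :=
  (I₂.F t).symm.trans ((I₁.F t).symm.trans ((I₂.F t).trans (I₁.F t)))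

/-- The invariant `W(f₁,f₂)` vanishes: for isotopies from the identity to
`f₁`, `f₂`, the commutator loop is null-homotopic (rel basepoint) in the group
of homeomorphisms. -/
def WVanishes {X : Type*} [TopologicalSpace X] (f₁ f₂ : X ≃ₜ X) : Prop :=
  ∃ (I₁ : HIsotopy f₁) (I₂ : HIsotopy f₂) (H : ℝ → ℝ → X ≃ₜ X),
    Continuous (fun p : (ℝ × ℝ) × X => H p.1.1 p.1.2 p.2) ∧
    Continuous (fun p : (ℝ × ℝ) × X => (H p.1.1 p.1.2).symm p.2) ∧
    (∀ t, H 0 t = commLoop I₁ I₂ t) ∧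
    (∀ t, H 1 t = Homeomorph.refl X) ∧
    (∀ s, H s 0 = Homeomorph.refl X) ∧
    (∀ s, H s 1 = Homeomorph.refl X)

/-- The shorter great-circle arc joining `p` to `z` on the unit sphere
(for `z` neither `p` nor its antipode): the points of the sphere which are
nonnegative linear combinations of `p` and `z`. -/
def minorArcS (p z : 𝕊²) : Set 𝕊² :=
  {x | ∃ a b : ℝ, 0 ≤ a ∧ 0 ≤ b ∧
    (x : EuclideanSpace ℝ (Fin 3)) =
      a • (p : EuclideanSpace ℝ (Fin 3)) + b • (z : EuclideanSpace ℝ (Fin 3))}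

/-- The longer great-circle arc joining `p` to `z` on the unit sphere. -/
def majorArcS (p z : 𝕊²) : Set 𝕊² :=
  {x | ∃ a b : ℝ, (a ≤ 0 ∨ b ≤ 0) ∧
    (x : EuclideanSpace ℝ (Fin 3)) =
      a • (p : EuclideanSpace ℝ (Fin 3)) + b • (z : EuclideanSpace ℝ (Fin 3))}

/-!
Since `f` extends to a homeomorphism of the compact space `OnePoint ℂ`, it is enough to control
linking numbers of fixed points near each point of the sphere, `∞` included. At a fixed point of
the extension, take a `C¹` chart and compare the isotopy with the straight-line interpolation
`(1 - t) u + t G u` between the identity and the local expression `G` of `f`. Both paths have the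
same endpoints, so their angular variations differ by an integer, which is constant on connected
sets of points, hence near the fixed point. The interpolation is stationary at fixed points, so
there the angular variation of the isotopy is itself locally constant.

The interpolation is usable only if it is injective near the fixed point, which holds once
`(1 - t) id + t dG` is invertible for all `t ∈ [0, 1]`. If `dG` does not fix any nonzero vector, the
fixed point is isolated and there is nothing to prove. Otherwise the eigenvalues of `dG` are `1` and
`det dG`, and `det dG > 0`: an isotopy preserves the winding number of a small circle, whereas
a negative determinant would reverse it.
-/

section AngularVariation

/-- A continuous path `[0,1] → ℂ ∖ {0}`: the paths on which `angVar` takes no junk value. -/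
structure IsPuncturedPath (γ : ℝ → ℂ) : Prop where
  continuousOn : ContinuousOn γ (Icc 0 1)
  ne_zero : ∀ t ∈ Icc (0 : ℝ) 1, γ t ≠ 0

/-- A continuous family, indexed by the points of `S`, of continuous paths in `ℂ ∖ {0}`. -/
structure IsPuncturedFamily {X : Type*} [TopologicalSpace X] (S : Set X) (Q : X → ℝ → ℂ) :
    Prop where
  continuousOn : ContinuousOn (fun p : X × ℝ => Q p.1 p.2) (S ×ˢ Icc 0 1)
  ne_zero : ∀ x ∈ S, ∀ t ∈ Icc (0 : ℝ) 1, Q x t ≠ 0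

variable {γ δ : ℝ → ℂ}

lemma IsPuncturedPath.div (hγ : IsPuncturedPath γ) (hδ : IsPuncturedPath δ) :
    IsPuncturedPath fun t => γ t / δ t :=
  ⟨hγ.continuousOn.div hδ.continuousOn hδ.ne_zero,
    fun t ht => div_ne_zero (hγ.ne_zero t ht) (hδ.ne_zero t ht)⟩

lemma IsPuncturedPath.exists_log (hγ : IsPuncturedPath γ) :
    ∃ L : ℝ → ℂ, ContinuousOn L (Icc 0 1) ∧ EqOn γ (fun t => Complex.exp (L t)) (Icc 0 1) := by
  let γ' : C(unitInterval, {z : ℂ // z ≠ 0}) :=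
    ⟨fun t => ⟨γ t, hγ.ne_zero t t.2⟩,
      (continuousOn_iff_continuous_domRestrict.1 hγ.continuousOn).subtype_mk _⟩
  have hγ0 : γ 0 ≠ 0 := hγ.ne_zero 0 (by simp)
  obtain ⟨L, hL, -⟩ := Complex.isCoveringMap_exp.exists_path_lifts γ' (Complex.log (γ 0))
    (Subtype.ext (Complex.exp_log hγ0).symm)
  refine ⟨fun t => L (projIcc 0 1 zero_le_one t),
    (L.continuous.comp continuous_projIcc).continuousOn, fun t ht => ?_⟩
  simp only [projIcc_of_mem zero_le_one ht]
  exact (congrArg Subtype.val (congrFun hL ⟨t, ht⟩)).symm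

lemma sub_eq_sub_of_exp_mul_I_eq {θ η : ℝ → ℝ} (hθ : ContinuousOn θ (Icc 0 1))
    (hη : ContinuousOn η (Icc 0 1))
    (hexp : ∀ t ∈ Icc (0 : ℝ) 1, Complex.exp (θ t * Complex.I) = Complex.exp (η t * Complex.I)) :
    θ 1 - θ 0 = η 1 - η 0 := by
  have hpi := Real.two_pi_pos.ne'
  have hint : MapsTo (fun t => (θ t - η t) / (2 * Real.pi)) (Icc 0 1)
      (range ((↑) : ℤ → ℝ)) := by
    intro t ht
    obtain ⟨n, hn⟩ := Complex.exp_eq_exp_iff_exists_int.1 (hexp t ht)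
    have him : θ t = η t + n * (2 * Real.pi) := by simpa using congrArg Complex.im hn
    exact ⟨n, by simp only [him]; field_simp; ring⟩
  have hconst := isPreconnected_Icc.constant_of_mapsTo
    Int.isClosedEmbedding_coe_real.isInducing.isDiscrete_range
    ((hθ.sub hη).div_const (2 * Real.pi)) hint
    (left_mem_Icc.2 zero_le_one) (right_mem_Icc.2 zero_le_one)
  have := (div_left_inj' hpi).1 hconst
  simp only [Pi.sub_apply] at this
  linarith

lemma angVar_eq_of_eqOn_exp {L : ℝ → ℂ} (hL : ContinuousOn L (Icc 0 1))
    (hγ : EqOn γ (fun t => Complex.exp (L t)) (Icc 0 1)) :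
    angVar γ = ((L 1).im - (L 0).im) / (2 * Real.pi) := by
  have hL_im : ContinuousOn (fun t => (L t).im) (Icc 0 1) :=
    Complex.continuous_im.comp_continuousOn hL
  have hpolar : ∀ t ∈ Icc (0 : ℝ) 1,
      γ t = (‖γ t‖ : ℂ) * Complex.exp (((L t).im : ℂ) * Complex.I) := by
    intro t ht
    rw [hγ ht, Complex.norm_exp, Complex.ofReal_exp, ← Complex.exp_add, Complex.re_add_im]
  have hlift : ∃ θ : ℝ → ℝ, ContinuousOn θ (Icc 0 1) ∧
      ∀ t ∈ Icc (0 : ℝ) 1, γ t = (‖γ t‖ : ℂ) * Complex.exp ((θ t : ℂ) * Complex.I) :=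
    ⟨_, hL_im, hpolar⟩
  rw [angVar, dif_pos hlift]
  congr 1
  refine sub_eq_sub_of_exp_mul_I_eq hlift.choose_spec.1 hL_im fun t ht => ?_
  have hnorm : (‖γ t‖ : ℂ) ≠ 0 := by simp [hγ ht]
  exact mul_left_cancel₀ hnorm ((hlift.choose_spec.2 t ht).symm.trans (hpolar t ht))

lemma angVar_congr (h : EqOn γ δ (Icc 0 1)) : angVar γ = angVar δ := by
  have hlift : (fun θ : ℝ → ℝ => ContinuousOn θ (Icc 0 1) ∧
        ∀ t ∈ Icc (0 : ℝ) 1, γ t = (‖γ t‖ : ℂ) * Complex.exp ((θ t : ℂ) * Complex.I)) =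
      fun θ : ℝ → ℝ => ContinuousOn θ (Icc 0 1) ∧
        ∀ t ∈ Icc (0 : ℝ) 1, δ t = (‖δ t‖ : ℂ) * Complex.exp ((θ t : ℂ) * Complex.I) :=
    funext fun θ => propext (and_congr_right' (forall₂_congr fun t ht => by rw [h ht]))
  exact congrArg (fun P : (ℝ → ℝ) → Prop =>
    if hP : ∃ θ, P θ then (hP.choose 1 - hP.choose 0) / (2 * Real.pi) else 0) hlift

lemma angVar_div (hγ : IsPuncturedPath γ) (hδ : IsPuncturedPath δ) :
    angVar (fun t => γ t / δ t) = angVar γ - angVar δ := by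
  obtain ⟨L, hL, hγL⟩ := hγ.exists_log
  obtain ⟨M, hM, hδM⟩ := hδ.exists_log
  rw [angVar_eq_of_eqOn_exp hL hγL, angVar_eq_of_eqOn_exp hM hδM,
    angVar_eq_of_eqOn_exp (hL.sub hM) fun t ht => by
      simp only [hγL ht, hδM ht, Pi.sub_apply, Complex.exp_sub]]
  simp only [Pi.sub_apply, Complex.sub_im]
  ring

lemma angVar_const {c : ℂ} (hc : c ≠ 0) : angVar (fun _ => c) = 0 := by
  rw [angVar_eq_of_eqOn_exp (L := fun _ => Complex.log c) continuousOn_const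
    fun _ _ => (Complex.exp_log hc).symm]
  simp

lemma angVar_neg (hγ : IsPuncturedPath γ) : angVar (fun t => -γ t) = angVar γ := by
  obtain ⟨L, hL, hγL⟩ := hγ.exists_log
  rw [angVar_eq_of_eqOn_exp hL hγL,
    angVar_eq_of_eqOn_exp (L := fun t => L t + Real.pi * Complex.I) (hL.add continuousOn_const)
      fun t ht => by simp [hγL ht, Complex.exp_add]]
  simp

lemma angVar_reverse (hγ : IsPuncturedPath γ) : angVar (fun t => γ (1 - t)) = -angVar γ := by
  obtain ⟨L, hL, hγL⟩ := hγ.exists_log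
  have hrev : MapsTo (fun t : ℝ => 1 - t) (Icc 0 1) (Icc 0 1) := fun t ht =>
    ⟨sub_nonneg.2 ht.2, sub_le_self _ ht.1⟩
  rw [angVar_eq_of_eqOn_exp hL hγL, angVar_eq_of_eqOn_exp (L := fun t => L (1 - t))
    (hL.comp (by fun_prop) hrev) fun t ht => hγL (hrev ht)]
  simp only [sub_self, sub_zero]
  ring

lemma angVar_eq_zero_of_mem_slitPlane (hγ : ContinuousOn γ (Icc 0 1))
    (hslit : ∀ t ∈ Icc (0 : ℝ) 1, γ t ∈ Complex.slitPlane) (hloop : γ 0 = γ 1) :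
    angVar γ = 0 := by
  rw [angVar_eq_of_eqOn_exp (hγ.clog hslit) fun t ht =>
    (Complex.exp_log (Complex.slitPlane_ne_zero (hslit t ht))).symm, hloop]
  simp

lemma angVar_eq_of_div_mem_slitPlane (hγ : IsPuncturedPath γ) (hδ : IsPuncturedPath δ)
    (hslit : ∀ t ∈ Icc (0 : ℝ) 1, γ t / δ t ∈ Complex.slitPlane)
    (hloop : γ 0 / δ 0 = γ 1 / δ 1) : angVar γ = angVar δ := by
  rw [← sub_eq_zero, ← angVar_div hγ hδ]
  exact angVar_eq_zero_of_mem_slitPlane (hγ.div hδ).continuousOn hslit hloop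

lemma IsPuncturedPath.exists_loop_log (hγ : IsPuncturedPath γ) (hloop : γ 0 = γ 1)
    (hwind : angVar γ = 0) : ∃ L : ℝ → ℂ, ContinuousOn L (Icc 0 1) ∧ L 0 = L 1 ∧
      EqOn γ (fun t => Complex.exp (L t)) (Icc 0 1) := by
  obtain ⟨L, hL, hγL⟩ := hγ.exists_log
  refine ⟨L, hL, Complex.ext ?_ ?_, hγL⟩
  · have hexp : Complex.exp (L 0) = Complex.exp (L 1) :=
      (hγL (by simp)).symm.trans (hloop.trans (hγL (by simp)))
    apply Real.exp_injective
    simpa only [Complex.norm_exp] using congrArg norm hexp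
  · rw [angVar_eq_of_eqOn_exp hL hγL, div_eq_zero_iff,
      or_iff_left Real.two_pi_pos.ne', sub_eq_zero] at hwind
    exact hwind.symm

end AngularVariation

section Families

variable {X : Type*} [TopologicalSpace X] {S : Set X} {Q Γ Δ : X → ℝ → ℂ}

lemma IsPuncturedFamily.isPuncturedPath (hQ : IsPuncturedFamily S Q) {x : X} (hx : x ∈ S) :
    IsPuncturedPath (Q x) :=
  ⟨hQ.continuousOn.comp (f := fun t => (x, t)) (by fun_prop) fun _ ht => ⟨hx, ht⟩,
    hQ.ne_zero x hx⟩

lemma IsPuncturedFamily.div (hΓ : IsPuncturedFamily S Γ) (hΔ : IsPuncturedFamily S Δ) :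
    IsPuncturedFamily S fun x t => Γ x t / Δ x t :=
  ⟨hΓ.continuousOn.div hΔ.continuousOn fun p hp => hΔ.ne_zero p.1 hp.1 p.2 hp.2,
    fun x hx t ht => div_ne_zero (hΓ.ne_zero x hx t ht) (hΔ.ne_zero x hx t ht)⟩

lemma IsPuncturedFamily.mono {T : Set X} (hQ : IsPuncturedFamily S Q) (hT : T ⊆ S) :
    IsPuncturedFamily T Q :=
  ⟨hQ.continuousOn.mono (prod_mono hT Subset.rfl), fun x hx => hQ.ne_zero x (hT hx)⟩

lemma IsPuncturedFamily.eventually_angVar_eq (hQ : IsPuncturedFamily S Q)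
    (hloop : ∀ x ∈ S, Q x 0 = Q x 1) {x : X} (hx : x ∈ S) :
    ∀ᶠ y in 𝓝[S] x, angVar (Q y) = angVar (Q x) := by
  have hslit : ∀ᶠ y in 𝓝 x, ∀ t ∈ Icc (0 : ℝ) 1,
      (y, t) ∈ S ×ˢ Icc (0 : ℝ) 1 → Q y t / Q x t ∈ Complex.slitPlane := by
    refine isCompact_Icc.eventually_forall_of_forall_eventually
      (P := fun y t => (y, t) ∈ S ×ˢ Icc (0 : ℝ) 1 → Q y t / Q x t ∈ Complex.slitPlane)
      fun t ht => eventually_nhdsWithin_iff.1 ?_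
    have hquot : ContinuousWithinAt (fun p : X × ℝ => Q p.1 p.2 / Q x p.2) (S ×ˢ Icc 0 1) (x, t) :=
      (hQ.continuousOn (x, t) ⟨hx, ht⟩).div
        (((hQ.isPuncturedPath hx).continuousOn t ht).comp continuousWithinAt_snd fun _ hp => hp.2)
        (hQ.ne_zero x hx t ht)
    refine hquot.eventually (Complex.isOpen_slitPlane.mem_nhds ?_)
    simp only [div_self (hQ.ne_zero x hx t ht), Complex.one_mem_slitPlane]
  refine eventually_nhdsWithin_iff.2 (hslit.mono fun y hy hyS => ?_)
  exact angVar_eq_of_div_mem_slitPlane (hQ.isPuncturedPath hyS) (hQ.isPuncturedPath hx)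
    (fun t ht => hy t ht ⟨hyS, ht⟩) (by rw [hloop y hyS, hloop x hx])

lemma IsPuncturedFamily.angVar_eq_of_isPreconnected (hQ : IsPuncturedFamily S Q)
    (hS : IsPreconnected S) (hloop : ∀ x ∈ S, Q x 0 = Q x 1) {x y : X} (hx : x ∈ S)
    (hy : y ∈ S) : angVar (Q x) = angVar (Q y) :=
  hS.induction₂ (fun a b => angVar (Q a) = angVar (Q b))
    (fun _ ha => (hQ.eventually_angVar_eq hloop ha).mono fun _ => Eq.symm)
    (fun _ _ _ _ _ _ => Eq.trans) (fun _ _ _ _ => Eq.symm) hx hy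

lemma IsPuncturedFamily.angVar_sub_eq_of_isPreconnected (hΓ : IsPuncturedFamily S Γ)
    (hΔ : IsPuncturedFamily S Δ) (hS : IsPreconnected S) (h₀ : ∀ x ∈ S, Γ x 0 = Δ x 0)
    (h₁ : ∀ x ∈ S, Γ x 1 = Δ x 1) {x y : X} (hx : x ∈ S) (hy : y ∈ S) :
    angVar (Γ x) - angVar (Δ x) = angVar (Γ y) - angVar (Δ y) := by
  have hloop : ∀ z ∈ S, Γ z 0 / Δ z 0 = Γ z 1 / Δ z 1 := fun z hz => by
    rw [h₀ z hz, h₁ z hz, div_self (hΔ.ne_zero z hz 0 (by simp)),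
      div_self (hΔ.ne_zero z hz 1 (by simp))]
  rw [← angVar_div (hΓ.isPuncturedPath hx) (hΔ.isPuncturedPath hx),
    ← angVar_div (hΓ.isPuncturedPath hy) (hΔ.isPuncturedPath hy)]
  exact (hΓ.div hΔ).angVar_eq_of_isPreconnected hS hloop hx hy

lemma angVar_comp_of_angVar_eq_zero {h : ℂ → ℂ} {γ : ℝ → ℂ} (hh : ContinuousOn h {0}ᶜ)
    (hh0 : ∀ z ≠ 0, h z ≠ 0) (hγ : IsPuncturedPath γ) (hloop : γ 0 = γ 1)
    (hwind : angVar γ = 0) : angVar (fun t => h (γ t)) = 0 := by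
  obtain ⟨L, hL, hL01, hγL⟩ := hγ.exists_loop_log hloop hwind
  have hexp : ContinuousOn (fun p : ℝ × ℝ => Complex.exp (p.1 * L p.2)) (Icc 0 1 ×ˢ Icc 0 1) :=
    ((Complex.continuous_ofReal.comp continuous_fst).continuousOn.mul
      (hL.comp continuous_snd.continuousOn fun _ hp => hp.2)).cexp
  have hfamily : IsPuncturedFamily (Icc (0 : ℝ) 1) fun τ t => h (Complex.exp (τ * L t)) :=
    ⟨hh.comp hexp fun _ _ => Complex.exp_ne_zero _, fun _ _ _ _ => hh0 _ (Complex.exp_ne_zero _)⟩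
  calc angVar (fun t => h (γ t))
      = angVar (fun t => h (Complex.exp ((1 : ℝ) * L t))) :=
        angVar_congr fun t ht => by simp only [hγL ht, Complex.ofReal_one, one_mul]
    _ = angVar (fun t => h (Complex.exp ((0 : ℝ) * L t))) :=
        hfamily.angVar_eq_of_isPreconnected isPreconnected_Icc (fun τ _ => by rw [hL01])
          (by simp) (by simp)
    _ = 0 := by
        simp only [Complex.ofReal_zero, zero_mul]
        exact angVar_const (hh0 _ (Complex.exp_ne_zero 0))

end Families

section Connectedness

lemma isPreconnected_offDiag {X : Type*} [TopologicalSpace X] {A : Set X} (hA : A.Infinite)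
    (hA' : ∀ y ∈ A, IsPreconnected (A \ {y})) : IsPreconnected A.offDiag := by
  have hrow : ∀ y ∈ A, IsPreconnected ((A \ {y}) ×ˢ {y}) := fun y hy =>
    (hA' y hy).prod isPreconnected_singleton
  have hcol : ∀ z ∈ A, IsPreconnected ({z} ×ˢ (A \ {z})) := fun z hz =>
    isPreconnected_singleton.prod (hA' z hz)
  refine isPreconnected_of_forall_pair ?_
  rintro ⟨x, y⟩ ⟨hx, hy, hxy⟩ ⟨x', y'⟩ ⟨hx', hy', hxy'⟩
  obtain ⟨z, hz, hzyy'⟩ := hA.exists_notMem_finite (toFinite {y, y'})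
  obtain ⟨hzy, hzy'⟩ : z ≠ y ∧ z ≠ y' := by simpa using hzyy'
  refine ⟨((A \ {y}) ×ˢ {y} ∪ {z} ×ˢ (A \ {z})) ∪ (A \ {y'}) ×ˢ {y'}, ?_, ?_, ?_, ?_⟩
  · rintro ⟨a, b⟩ hab
    simp only [mem_union, mem_prod, Set.mem_sdiff, mem_singleton_iff] at hab
    simp only [mem_offDiag]
    grind
  · exact Or.inl (Or.inl ⟨⟨hx, hxy⟩, rfl⟩)
  · exact Or.inr ⟨⟨hx', hxy'⟩, rfl⟩
  · have hL : IsPreconnected ((A \ {y}) ×ˢ {y} ∪ {z} ×ˢ (A \ {z})) :=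
      .union (z, y) ⟨⟨hz, hzy⟩, rfl⟩ ⟨rfl, hy, hzy.symm⟩ (hrow y hy) (hcol z hz)
    exact .union (z, y') (Or.inr ⟨rfl, hy', hzy'.symm⟩) ⟨⟨hz, hzy'⟩, rfl⟩ hL (hrow y' hy')

lemma isPreconnected_ball_sdiff_of_countable {E : Type*} [NormedAddCommGroup E]
    [InnerProductSpace ℝ E] (hE : 1 < Module.rank ℝ E) (c : E) {r : ℝ} (hr : 0 < r) {T : Set E}
    (hT : T.Countable) : IsPreconnected (ball c r \ T) := by
  let e := OpenPartialHomeomorph.univBall c r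
  have he : InjOn e univ := OpenPartialHomeomorph.univBall_source c r ▸ e.injOn
  have himage : ball c r \ T = e '' (e ⁻¹' T)ᶜ := by
    rw [← OpenPartialHomeomorph.univBall_target c hr, ← e.image_source_eq_target,
      OpenPartialHomeomorph.univBall_source, ← preimage_compl, image_preimage_eq_range_inter,
      image_univ, sdiff_eq]
  rw [himage]
  exact ((hT.preimage (injOn_univ.1 he)).isConnected_compl_of_one_lt_rank hE).isPreconnected.image _
    (OpenPartialHomeomorph.continuous_univBall c r).continuousOn

lemma isPreconnected_offDiag_ball_sdiff_singleton {E : Type*} [NormedAddCommGroup E]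
    [InnerProductSpace ℝ E] (hE : 1 < Module.rank ℝ E) (c : E) {r : ℝ} (hr : 0 < r) :
    IsPreconnected (ball c r \ {c}).offDiag := by
  have : Nontrivial E := (rank_pos_iff_nontrivial (R := ℝ)).1 (zero_lt_one.trans hE)
  refine isPreconnected_offDiag
    ((infinite_of_mem_nhds c (ball_mem_nhds c hr)).sdiff (finite_singleton c)) fun y _ => ?_
  rw [sdiff_sdiff]
  exact isPreconnected_ball_sdiff_of_countable hE c hr
    ((countable_singleton c).union (countable_singleton y))

end Connectedness

section LocalInjectivity

variable {𝕜 E F : Type*} [NontriviallyNormedField 𝕜] [CompleteSpace 𝕜]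
  [NormedAddCommGroup E] [NormedSpace 𝕜 E] [FiniteDimensional 𝕜 E]
  [NormedAddCommGroup F] [NormedSpace 𝕜 F]

lemma exists_mem_nhds_injOn_of_hasStrictFDerivAt {f : E → F} {f' : E →L[𝕜] F} {a : E}
    (hf : HasStrictFDerivAt f f' a) (hf' : Function.Injective f') : ∃ s ∈ 𝓝 a, InjOn f s := by
  obtain ⟨K, hK, hanti⟩ := (f' : E →ₗ[𝕜] F).injective_iff_antilipschitz.1 hf'
  obtain ⟨s, hs, happrox⟩ := hf.approximates_deriv_on_nhds (Or.inr (half_pos (inv_pos.2 hK)))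
  refine ⟨s, hs, injOn_iff_injective.2 ?_⟩
  have hsum : s.domRestrict f = s.domRestrict f' + s.domRestrict (f - ⇑f') :=
    funext fun x => (add_sub_cancel (f' x) (f x)).symm
  rw [hsum]
  exact ((hanti.domRestrict s).add_lipschitzWith happrox.lipschitz_sub
    (NNReal.half_lt_self (inv_pos.2 hK).ne')).injective

end LocalInjectivity

/-- Apply local injectivity to `(x, τ) ↦ (lineMap (g x) (h x) τ, τ)`, then use compactness of
`[0, 1]`. -/
lemma exists_mem_nhds_injOn_lineMap {E F : Type*}
    [NormedAddCommGroup E] [NormedSpace ℝ E] [FiniteDimensional ℝ E] [NormedAddCommGroup F]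
    [NormedSpace ℝ F] {g h : E → F} {g' h' : E →L[ℝ] F} {a : E}
    (hg : HasStrictFDerivAt g g' a) (hh : HasStrictFDerivAt h h' a)
    (hinj : ∀ τ ∈ Icc (0 : ℝ) 1, ∀ v, AffineMap.lineMap (g' v) (h' v) τ = 0 → v = 0) :
    ∃ s ∈ 𝓝 a, ∀ τ ∈ Icc (0 : ℝ) 1, InjOn (fun x => AffineMap.lineMap (g x) (h x) τ) s := by
  have hlocal : ∀ τ₀ ∈ Icc (0 : ℝ) 1, ∀ᶠ q : (E × E) × ℝ in 𝓝 ((a, a), τ₀),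
      AffineMap.lineMap (g q.1.1) (h q.1.1) q.2 = AffineMap.lineMap (g q.1.2) (h q.1.2) q.2 →
        q.1.1 = q.1.2 := by
    intro τ₀ hτ₀
    let Φ : E × ℝ → F × ℝ := fun p => (g p.1 + p.2 • (h p.1 - g p.1), p.2)
    have hg₁ : HasStrictFDerivAt (fun p : E × ℝ => g p.1) _ (a, τ₀) :=
      HasStrictFDerivAt.comp (a, τ₀) hg hasStrictFDerivAt_fst
    have hh₁ : HasStrictFDerivAt (fun p : E × ℝ => h p.1) _ (a, τ₀) :=
      HasStrictFDerivAt.comp (a, τ₀) hh hasStrictFDerivAt_fst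
    have hΦ : HasStrictFDerivAt Φ _ (a, τ₀) :=
      (hg₁.add (hasStrictFDerivAt_snd.smul (hh₁.sub hg₁))).prodMk hasStrictFDerivAt_snd
    obtain ⟨s, hs, hΦs⟩ := exists_mem_nhds_injOn_of_hasStrictFDerivAt hΦ <| by
      refine (injective_iff_map_eq_zero _).2 ?_
      rintro ⟨v, σ⟩ hv
      obtain ⟨hv₁, rfl⟩ := Prod.ext_iff.1 hv
      exact Prod.ext (hinj τ₀ hτ₀ v (by
        simpa [AffineMap.lineMap_apply_module', add_comm] using hv₁)) rfl
    have hleft : Tendsto (fun q : (E × E) × ℝ => (q.1.1, q.2)) (𝓝 ((a, a), τ₀)) (𝓝 (a, τ₀)) :=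
      Continuous.tendsto (by fun_prop) _
    have hright : Tendsto (fun q : (E × E) × ℝ => (q.1.2, q.2)) (𝓝 ((a, a), τ₀)) (𝓝 (a, τ₀)) :=
      Continuous.tendsto (by fun_prop) _
    filter_upwards [hleft hs, hright hs] with q hq₁ hq₂ hq
    simp only [AffineMap.lineMap_apply_module', add_comm] at hq
    exact congrArg Prod.fst (hΦs hq₁ hq₂ (Prod.ext hq rfl))
  have hpairs := isCompact_Icc.eventually_forall_of_forall_eventually
    (P := fun (p : E × E) τ => AffineMap.lineMap (g p.1) (h p.1) τ =
      AffineMap.lineMap (g p.2) (h p.2) τ → p.1 = p.2) hlocal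
  rw [nhds_prod_eq] at hpairs
  obtain ⟨s, hs, hpairs⟩ := mem_prod_self_iff.1 hpairs
  exact ⟨s, hs, fun τ hτ x hx y hy => hpairs (mk_mem_prod hx hy) τ hτ⟩

section Shear

/-- The real-linear map of the plane fixing `1` and sending `I` to `q`. -/
def shear (q : ℂ) : ℂ →L[ℝ] ℂ :=
  Complex.reCLM.smulRight 1 + Complex.imCLM.smulRight q

lemma shear_apply (q z : ℂ) : shear q z = z.re + z.im * q := by
  simp [shear]

lemma shear_I (z : ℂ) : shear Complex.I z = z := by
  rw [shear_apply, Complex.re_add_im]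

lemma shear_neg_I (z : ℂ) : shear (-Complex.I) z = starRingEnd ℂ z := by
  apply Complex.ext <;> simp [shear_apply]

lemma eq_shear_of_map_one {A : ℂ →L[ℝ] ℂ} (hA : A 1 = 1) : A = shear (A Complex.I) := by
  ext z
  have hz : z = z.re • (1 : ℂ) + z.im • Complex.I := by simp [Complex.re_add_im]
  rw [shear_apply]
  conv_lhs => rw [hz, map_add, map_smul, map_smul, hA]
  simp only [Complex.real_smul, mul_one]

lemma shear_lineMap (q q' z : ℂ) (τ : ℝ) :
    shear (AffineMap.lineMap q q' τ) z = AffineMap.lineMap (shear q z) (shear q' z) τ := by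
  simp only [AffineMap.lineMap_apply_module', shear_apply, Complex.real_smul]
  ring

lemma im_ne_zero_of_injective_shear {q : ℂ} (hq : Function.Injective (shear q)) : q.im ≠ 0 := by
  intro him
  have hI : shear q Complex.I = shear q q.re := by
    apply Complex.ext <;> simp [shear_apply, him]
  simpa using congrArg Complex.im (hq hI)

lemma eq_zero_of_shear_eq_zero {q z : ℂ} (hq : q.im ≠ 0) (hz : shear q z = 0) : z = 0 := by
  rw [shear_apply] at hz
  have him : z.im = 0 := by simpa [hq] using congrArg Complex.im hz
  exact Complex.ext (by simpa [him] using congrArg Complex.re hz) him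

lemma eq_zero_of_lineMap_shear_eq_zero {q q' z : ℂ} (hqq' : 0 < q.im * q'.im) {τ : ℝ}
    (hτ : τ ∈ Icc (0 : ℝ) 1) (hz : AffineMap.lineMap (shear q z) (shear q' z) τ = 0) : z = 0 := by
  rw [← shear_lineMap] at hz
  refine eq_zero_of_shear_eq_zero (fun him => ?_) hz
  have him' : (1 - τ) * q.im + τ * q'.im = 0 := by
    simpa [AffineMap.lineMap_apply_module] using him
  have hsum : (1 - τ) * (q.im * q.im) + τ * (q.im * q'.im) = 0 := by
    linear_combination q.im * him'
  have hq : 0 < q.im * q.im := mul_self_pos.2 (left_ne_zero_of_mul hqq'.ne')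
  nlinarith [hτ.1, hτ.2, mul_nonneg hτ.1 hqq'.le, mul_nonneg (sub_nonneg.2 hτ.2) hq.le]

end Shear

section CircleLoop

/-- The loop `[0,1] → ℂ` running once along the circle of radius `ρ` about the origin. -/
def circleLoop (ρ s : ℝ) : ℂ :=
  circleMap 0 ρ (2 * Real.pi * s)

lemma continuous_circleLoop (ρ : ℝ) : Continuous (circleLoop ρ) :=
  (continuous_circleMap 0 ρ).comp (by fun_prop)

lemma circleLoop_mem_ball_sdiff {ρ r : ℝ} (hρ : 0 < ρ) (hr : ρ < r) (s : ℝ) :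
    circleLoop ρ s ∈ ball (0 : ℂ) r \ {0} :=
  ⟨by simpa [circleLoop, abs_of_pos hρ] using hr, circleMap_ne_center hρ.ne'⟩

lemma circleLoop_zero_eq_one (ρ : ℝ) : circleLoop ρ 0 = circleLoop ρ 1 := by
  simp [circleLoop, circleMap]

lemma conj_circleLoop (ρ s : ℝ) : starRingEnd ℂ (circleLoop ρ s) = circleLoop ρ (1 - s) := by
  have hangle : 2 * Real.pi * (1 - s) = -(2 * Real.pi * s) + 2 * Real.pi := by ring
  rw [circleLoop, circleLoop, hangle, periodic_circleMap, conj_circleMap_zero]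

lemma angVar_circleLoop {ρ : ℝ} (hρ : 0 < ρ) : angVar (circleLoop ρ) = 1 := by
  rw [angVar_eq_of_eqOn_exp (L := fun s => Real.log ρ + (2 * Real.pi * s : ℝ) * Complex.I)
    (by fun_prop) fun s _ => by
      simp [circleLoop, circleMap, Complex.exp_add, ← Complex.ofReal_exp, Real.exp_log hρ]]
  simp [Real.pi_ne_zero]

end CircleLoop

namespace HIsotopy

variable {f : ℂ ≃ₜ ℂ} (I : HIsotopy f)

lemma apply_zero (z : ℂ) : I.F 0 z = z := by
  simp only [I.zero, Homeomorph.refl_apply, id]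

lemma apply_one (z : ℂ) : I.F 1 z = f z := by
  rw [I.one]

lemma continuousOn_apply_comp {X : Type*} [TopologicalSpace X] {S : Set X} {g : X → ℂ}
    (hg : ContinuousOn g S) :
    ContinuousOn (fun p : X × ℝ => I.F p.2 (g p.1)) (S ×ˢ Icc 0 1) :=
  I.cont.comp_continuousOn
    (continuousOn_snd.prodMk (hg.comp continuousOn_fst fun _ hp => hp.1))

lemma isPuncturedFamily_sub : IsPuncturedFamily {q : ℂ × ℂ | q.1 ≠ q.2}
    fun q t => I.F t q.1 - I.F t q.2 :=
  ⟨(I.continuousOn_apply_comp continuousOn_fst).sub (I.continuousOn_apply_comp continuousOn_snd),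
    fun _ hq t _ => sub_ne_zero.2 ((I.F t).injective.ne hq)⟩

lemma angVar_sub_eq_angVar_apply_sub {γ : ℝ → ℂ} {p : ℂ} (hγ : ContinuousOn γ (Icc 0 1))
    (hloop : γ 0 = γ 1)
    (havoid : ∀ s ∈ Icc (0 : ℝ) 1, ∀ t ∈ Icc (0 : ℝ) 1, I.F t (γ s) ≠ p) :
    angVar (fun s => γ s - p) = angVar fun s => f (γ s) - p := by
  have hfamily : IsPuncturedFamily (Icc (0 : ℝ) 1) fun t s => I.F t (γ s) - p := by
    have hγ' : ContinuousOn (fun q : ℝ × ℝ => (q.1, γ q.2)) (Icc 0 1 ×ˢ Icc 0 1) :=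
      continuousOn_fst.prodMk (hγ.comp continuousOn_snd fun _ hq => hq.2)
    exact ⟨(I.cont.comp_continuousOn hγ').sub continuousOn_const,
      fun t ht s hs => sub_ne_zero.2 (havoid s hs t ht)⟩
  simpa only [I.apply_zero, I.apply_one] using
    hfamily.angVar_eq_of_isPreconnected isPreconnected_Icc (fun t _ => by rw [hloop])
      (left_mem_Icc.2 zero_le_one) (right_mem_Icc.2 zero_le_one)

/-- The isotopy `I` followed by the translations that keep the fixed point `z₀` of `f` still. -/
def recenter {z₀ : ℂ} (hz₀ : f z₀ = z₀) : HIsotopy f where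
  F t := (I.F t).trans (Homeomorph.addRight (z₀ - I.F t z₀))
  cont := I.cont.add (continuous_const.sub
    (I.cont.comp (continuous_fst.prodMk continuous_const)))
  cont_symm := by
    refine I.cont_symm.comp (continuous_fst.prodMk (continuous_snd.add ?_))
    exact (continuous_const.sub (I.cont.comp (continuous_fst.prodMk continuous_const))).neg
  zero := by ext z; simp [I.apply_zero]
  one := by ext z; simp [I.apply_one, hz₀]

lemma recenter_apply {z₀ : ℂ} (hz₀ : f z₀ = z₀) (t : ℝ) (z : ℂ) :
    (I.recenter hz₀).F t z = I.F t z + (z₀ - I.F t z₀) :=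
  rfl

lemma enlace_recenter {z₀ : ℂ} (hz₀ : f z₀ = z₀) (z z' : ℂ) :
    Enlace (I.recenter hz₀) z z' = Enlace I z z' := by
  simp only [Enlace, recenter_apply, add_sub_add_right_eq_sub]

lemma angVar_recenter_sub {z₀ : ℂ} (hz₀ : f z₀ = z₀) (z : ℂ) :
    angVar (fun t => (I.recenter hz₀).F t z - z₀) = Enlace I z z₀ := by
  simp only [Enlace, recenter_apply]
  congr 1
  ext t
  ring

end HIsotopy

lemma exists_forall_eq_of_forall_forall_eq {α β : Type*} [Nonempty β] {g : α → β} {s : Set α}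
    (h : ∀ a ∈ s, ∀ b ∈ s, g a = g b) : ∃ c, ∀ a ∈ s, g a = c := by
  obtain rfl | ⟨b, hb⟩ := s.eq_empty_or_nonempty
  · exact ⟨Classical.arbitrary β, by simp⟩
  · exact ⟨g b, fun a ha => h a ha b hb⟩

lemma map_mul_left_nhdsNE_zero {v : ℂ} (hv : v ≠ 0) :
    map (fun u => v * u) (𝓝[≠] 0) = 𝓝[≠] 0 := by
  simpa using (Homeomorph.mulLeft₀ v hv).map_punctured_nhds_eq 0

/-- A chart of the plane at an end `l` of `ℂ ∖ {p}` in which `f` becomes a map `G` fixing the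
origin, strictly differentiable there with invertible derivative `A`. The ends of interest are
`𝓝[≠] p` and `cocompact ℂ`. -/
structure PuncturedC1Chart (f : ℂ ≃ₜ ℂ) (l : Filter ℂ) (p : ℂ) where
  ψ : OpenPartialHomeomorph ℂ ℂ
  source_eq : ψ.source = {0}ᶜ
  target_eq : ψ.target = {p}ᶜ
  map_nhdsNE : map ψ (𝓝[≠] 0) = l
  G : ℂ → ℂ
  A : ℂ →L[ℝ] ℂ
  hasStrictFDerivAt : HasStrictFDerivAt G A 0
  map_zero : G 0 = 0
  injective : Function.Injective A
  conj : ∀ᶠ u in 𝓝[≠] 0, ψ (G u) = f (ψ u)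

namespace PuncturedC1Chart

variable {f : ℂ ≃ₜ ℂ} {l : Filter ℂ} {p : ℂ} (D : PuncturedC1Chart f l p)

lemma mem_source {u : ℂ} (hu : u ≠ 0) : u ∈ D.ψ.source :=
  D.source_eq ▸ hu

lemma continuousOn : ContinuousOn D.ψ {0}ᶜ :=
  D.source_eq ▸ D.ψ.continuousOn

lemma apply_ne {u : ℂ} (hu : u ≠ 0) : D.ψ u ≠ p := by
  have := D.ψ.map_source (D.mem_source hu)
  rwa [D.target_eq] at this

lemma injOn : InjOn D.ψ {0}ᶜ :=
  D.source_eq ▸ D.ψ.injOn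

lemma isPuncturedPath_comp {γ : ℝ → ℂ} (hγ : IsPuncturedPath γ) :
    IsPuncturedPath fun s => D.ψ (γ s) - p :=
  ⟨(D.continuousOn.comp hγ.continuousOn hγ.ne_zero).sub continuousOn_const,
    fun s hs => sub_ne_zero.2 (D.apply_ne (hγ.ne_zero s hs))⟩

lemma angVar_comp_ne_zero {γ : ℝ → ℂ} (hγ : IsPuncturedPath γ) (hloop : γ 0 = γ 1)
    (hwind : angVar γ ≠ 0) : angVar (fun s => D.ψ (γ s) - p) ≠ 0 := by
  have htarget : MapsTo (fun z => z + p) {0}ᶜ D.ψ.target := fun z hz => by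
    simpa [D.target_eq] using hz
  refine fun h => hwind ?_
  have hback := angVar_comp_of_angVar_eq_zero (h := fun z => D.ψ.symm (z + p))
    (D.ψ.continuousOn_symm.comp (by fun_prop) htarget)
    (fun z hz => by simpa [D.source_eq] using D.ψ.map_target (htarget hz))
    (D.isPuncturedPath_comp hγ) (by rw [hloop]) h
  rw [← hback]
  refine angVar_congr fun s hs => ?_
  simp only [sub_add_cancel]
  exact (D.ψ.left_inv (D.mem_source (hγ.ne_zero s hs))).symm

lemma eventually_G_ne_zero : ∀ᶠ u in 𝓝[≠] 0, D.G u ≠ 0 :=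
  D.hasStrictFDerivAt.hasFDerivAt.eventually_ne
    (((D.A : ℂ →ₗ[ℝ] ℂ).injective_iff_antilipschitz.1 D.injective).imp fun _ => And.right)

lemma eventually_G_eq_of_mem_fixPts :
    ∀ᶠ u in 𝓝[≠] 0, D.ψ u ∈ FixPts f → D.G u = u := by
  filter_upwards [D.conj, D.eventually_G_ne_zero, self_mem_nhdsWithin] with u hconj hG hu hfix
  exact D.injOn hG hu (hconj.trans hfix)

lemma eventually_notMem_fixPts (hA : ∀ v, D.A v = v → v = 0) : ∀ᶠ z in l, z ∉ FixPts f := by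
  have hinj : Function.Injective (D.A - ContinuousLinearMap.id ℝ ℂ) :=
    (injective_iff_map_eq_zero _).2 fun v hv => hA v (sub_eq_zero.1 hv)
  have hne : ∀ᶠ u in 𝓝[≠] 0, D.G u - u ≠ 0 :=
    (D.hasStrictFDerivAt.hasFDerivAt.sub (hasFDerivAt_id 0)).eventually_ne
      (((D.A - ContinuousLinearMap.id ℝ ℂ :) : ℂ →ₗ[ℝ] ℂ).injective_iff_antilipschitz.1 hinj |>.imp
        fun _ => And.right)
  rw [← D.map_nhdsNE, eventually_map]
  filter_upwards [hne, D.eventually_G_eq_of_mem_fixPts] with u hu hfix hmem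
  exact hu (sub_eq_zero.2 (hfix hmem))

/-- The chart with its coordinate multiplied by `v`. -/
def rescale {v : ℂ} (hv : v ≠ 0) : PuncturedC1Chart f l p where
  ψ := (Homeomorph.mulLeft₀ v hv).toOpenPartialHomeomorph.trans D.ψ
  source_eq := by
    ext u
    simp [D.source_eq, hv]
  target_eq := by
    ext z
    simp [D.target_eq]
  map_nhdsNE := by
    rw [OpenPartialHomeomorph.coe_trans, ← map_map]
    exact (congrArg (map D.ψ) (map_mul_left_nhdsNE_zero hv)).trans D.map_nhdsNE
  G u := v⁻¹ * D.G (v * u)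
  A := (ContinuousLinearMap.mul ℝ ℂ v⁻¹).comp (D.A.comp (ContinuousLinearMap.mul ℝ ℂ v))
  hasStrictFDerivAt := by
    have hG : HasStrictFDerivAt D.G D.A (ContinuousLinearMap.mul ℝ ℂ v 0) := by
      simpa using D.hasStrictFDerivAt
    exact (ContinuousLinearMap.mul ℝ ℂ v⁻¹).hasStrictFDerivAt.comp 0
      (hG.comp 0 (ContinuousLinearMap.mul ℝ ℂ v).hasStrictFDerivAt)
  map_zero := by simp [D.map_zero]
  injective := (mul_right_injective₀ (inv_ne_zero hv)).comp
    (D.injective.comp (mul_right_injective₀ hv))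
  conj := by
    have hconj := D.conj
    rw [← map_mul_left_nhdsNE_zero hv, eventually_map] at hconj
    filter_upwards [hconj] with u hu
    simpa [mul_inv_cancel_left₀ hv] using hu

lemma rescale_A_one {v : ℂ} (hv : v ≠ 0) (hA : D.A v = v) : (D.rescale hv).A 1 = 1 := by
  simp [rescale, hA, hv]

variable {I : HIsotopy f}

lemma exists_ball_continuousOn {P : ℂ → Prop} (hP : ∀ᶠ u in 𝓝[≠] (0 : ℂ), P u) :
    ∃ R > 0, ContinuousOn D.G (ball 0 R) ∧ ∀ u ∈ ball (0 : ℂ) R \ {0}, P u := by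
  obtain ⟨K, s, hs, hlip⟩ := D.hasStrictFDerivAt.exists_lipschitzOnWith
  obtain ⟨R₁, hR₁, hball₁⟩ := Metric.mem_nhds_iff.1 hs
  obtain ⟨R₂, hR₂, hball₂⟩ := Metric.mem_nhdsWithin_iff.1 hP
  refine ⟨min R₁ R₂, lt_min hR₁ hR₂, hlip.continuousOn.mono
    ((ball_subset_ball (min_le_left _ _)).trans hball₁), fun u hu => ?_⟩
  exact hball₂ ⟨ball_subset_ball (min_le_right _ _) hu.1, hu.2⟩

lemma angVar_comp_eq_of_lineMap_ne_zero {α β : ℝ → ℂ} (hα : Continuous α) (hβ : Continuous β)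
    (hα' : α 0 = α 1) (hβ' : β 0 = β 1)
    (hne : ∀ τ ∈ Icc (0 : ℝ) 1, ∀ s ∈ Icc (0 : ℝ) 1, AffineMap.lineMap (α s) (β s) τ ≠ 0) :
    angVar (fun s => D.ψ (α s) - p) = angVar (fun s => D.ψ (β s) - p) := by
  have hfamily : IsPuncturedFamily (Icc (0 : ℝ) 1)
      fun τ s => D.ψ (AffineMap.lineMap (α s) (β s) τ) - p := by
    refine ⟨(D.continuousOn.comp ?_ fun q hq => hne q.1 hq.1 q.2 hq.2).sub continuousOn_const,
      fun τ hτ s hs => sub_ne_zero.2 (D.apply_ne (hne τ hτ s hs))⟩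
    simp only [AffineMap.lineMap_apply_module']
    fun_prop
  simpa using hfamily.angVar_eq_of_isPreconnected isPreconnected_Icc
    (fun τ _ => by rw [hα', hβ']) (x := 0) (y := 1) (by simp) (by simp)

lemma eventually_comp {P : ℂ → Prop} (hP : ∀ᶠ z in l, P z) : ∀ᶠ u in 𝓝[≠] 0, P (D.ψ u) := by
  rwa [← D.map_nhdsNE, eventually_map] at hP

lemma eventually_lineMap_conj_ne_zero (hA : D.A 1 = 1) (him : (D.A Complex.I).im < 0) :
    ∀ᶠ u in 𝓝[≠] (0 : ℂ), ∀ τ ∈ Icc (0 : ℝ) 1,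
      AffineMap.lineMap (D.G u) (starRingEnd ℂ u) τ ≠ 0 := by
  have hconj : HasStrictFDerivAt (fun u => starRingEnd ℂ u) (shear (-Complex.I)) 0 :=
    (shear (-Complex.I)).hasStrictFDerivAt.congr_of_eventuallyEq (.of_forall shear_neg_I)
  obtain ⟨s, hs, hinj⟩ := exists_mem_nhds_injOn_lineMap D.hasStrictFDerivAt hconj
    fun τ hτ v hv => by
      rw [eq_shear_of_map_one hA] at hv
      exact eq_zero_of_lineMap_shear_eq_zero (by simpa using him) hτ hv
  filter_upwards [mem_nhdsWithin_of_mem_nhds hs, self_mem_nhdsWithin] with u hus hu τ hτ h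
  exact hu (hinj τ hτ hus (mem_of_mem_nhds hs) (by simpa [D.map_zero] using h))

/-- Were the orientation reversed, `G` would be homotopic to conjugation near the origin, so that
the isotopy would carry the image of a small circle to its reverse. -/
lemma im_A_I_pos (hA : D.A 1 = 1) (hav : ∀ᶠ z in l, ∀ t ∈ Icc (0 : ℝ) 1, I.F t z ≠ p) :
    0 < (D.A Complex.I).im := by
  by_contra! him
  replace him := him.lt_of_ne
    (im_ne_zero_of_injective_shear (eq_shear_of_map_one hA ▸ D.injective))
  obtain ⟨R, hR, hGcont, hball⟩ := D.exists_ball_continuousOn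
    ((D.eventually_lineMap_conj_ne_zero hA him).and (D.conj.and (D.eventually_comp hav)))
  let u := circleLoop (R / 2)
  have hu_mem : ∀ s, u s ∈ ball (0 : ℂ) R \ {0} :=
    circleLoop_mem_ball_sdiff (half_pos hR) (half_lt_self hR)
  have hu : Continuous u := continuous_circleLoop (R / 2)
  have hu' : u 0 = u 1 := circleLoop_zero_eq_one (R / 2)
  have hu_path : IsPuncturedPath u := ⟨hu.continuousOn, fun s _ => (hu_mem s).2⟩
  have hne : ∀ τ ∈ Icc (0 : ℝ) 1, ∀ t ∈ Icc (0 : ℝ) 1,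
      AffineMap.lineMap (D.G (u t)) (u (1 - t)) τ ≠ 0 := fun τ hτ t _ => by
    simpa only [u, conj_circleLoop] using (hball _ (hu_mem t)).1 τ hτ
  refine D.angVar_comp_ne_zero hu_path hu' (by simp [u, angVar_circleLoop (half_pos hR)]) ?_
  refine self_eq_neg.1 ?_
  calc angVar (fun t => D.ψ (u t) - p)
      = angVar fun t => f (D.ψ (u t)) - p := I.angVar_sub_eq_angVar_apply_sub
        (D.continuousOn.comp hu.continuousOn fun t _ => (hu_mem t).2) (by rw [hu'])
        fun t _ => (hball _ (hu_mem t)).2.2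
    _ = angVar fun t => D.ψ (D.G (u t)) - p :=
        angVar_congr fun t _ => by simp only [(hball _ (hu_mem t)).2.1]
    _ = angVar fun t => D.ψ (u (1 - t)) - p := D.angVar_comp_eq_of_lineMap_ne_zero
        (hGcont.comp_continuous hu fun t => (hu_mem t).1) (by fun_prop) (by rw [hu'])
        (by simp [hu']) hne
    _ = -angVar fun t => D.ψ (u t) - p := angVar_reverse (D.isPuncturedPath_comp hu_path)

/-- A ball on which the straight-line homotopy from the identity to `G` runs through injective
maps and stays comparable with the isotopy `I` through the chart. -/
structure IsInterpolationBall (I : HIsotopy f) (r : ℝ) : Prop where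
  pos : 0 < r
  continuousOn : ContinuousOn D.G (ball 0 r)
  injOn : ∀ τ ∈ Icc (0 : ℝ) 1, InjOn (fun u => AffineMap.lineMap u (D.G u) τ) (ball 0 r)
  conj : ∀ u ∈ ball (0 : ℂ) r \ {0}, D.ψ (D.G u) = f (D.ψ u)
  apply_ne : ∀ u ∈ ball (0 : ℂ) r \ {0}, ∀ t ∈ Icc (0 : ℝ) 1, I.F t (D.ψ u) ≠ p

lemma exists_isInterpolationBall (hA : D.A 1 = 1)
    (hav : ∀ᶠ z in l, ∀ t ∈ Icc (0 : ℝ) 1, I.F t z ≠ p) :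
    ∃ r, D.IsInterpolationBall I r := by
  obtain ⟨s, hs, hinj⟩ := exists_mem_nhds_injOn_lineMap (hasStrictFDerivAt_id (𝕜 := ℝ) (0 : ℂ))
    D.hasStrictFDerivAt fun τ hτ v hv => by
      refine eq_zero_of_lineMap_shear_eq_zero (q := Complex.I) (q' := D.A Complex.I)
        (by simpa using D.im_A_I_pos hA hav) hτ ?_
      rwa [shear_I, ← eq_shear_of_map_one hA]
  obtain ⟨r₁, hr₁, hball₁⟩ := Metric.mem_nhds_iff.1 hs
  obtain ⟨r₂, hr₂, hGcont, hball₂⟩ :=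
    D.exists_ball_continuousOn (D.conj.and (D.eventually_comp hav))
  have hsub : ball (0 : ℂ) (min r₁ r₂) ⊆ ball 0 r₂ := ball_subset_ball (min_le_right _ _)
  exact ⟨min r₁ r₂, lt_min hr₁ hr₂, hGcont.mono hsub,
    fun τ hτ => (hinj τ hτ).mono ((ball_subset_ball (min_le_left _ _)).trans hball₁),
    fun u hu => (hball₂ u ⟨hsub hu.1, hu.2⟩).1, fun u hu => (hball₂ u ⟨hsub hu.1, hu.2⟩).2⟩

namespace IsInterpolationBall

variable {D} {r : ℝ} (hB : D.IsInterpolationBall I r)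

include hB

lemma eventually_mem : ∀ᶠ u in 𝓝[≠] 0, u ∈ ball (0 : ℂ) r \ {0} :=
  sdiff_mem_nhdsWithin_compl (ball_mem_nhds 0 hB.pos) {0}

lemma lineMap_ne_zero {u : ℂ} (hu : u ∈ ball (0 : ℂ) r \ {0}) {τ : ℝ} (hτ : τ ∈ Icc (0 : ℝ) 1) :
    AffineMap.lineMap u (D.G u) τ ≠ 0 := fun h =>
  hu.2 (hB.injOn τ hτ hu.1 (mem_ball_self hB.pos) (by simpa [D.map_zero] using h))

lemma continuousOn_comp_lineMap :
    ContinuousOn (fun q : ℂ × ℝ => D.ψ (AffineMap.lineMap q.1 (D.G q.1) q.2))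
      ((ball 0 r \ {0}) ×ˢ Icc 0 1) := by
  refine D.continuousOn.comp ?_ fun q hq => hB.lineMap_ne_zero hq.1 hq.2
  have hG : ContinuousOn (fun q : ℂ × ℝ => D.G q.1) ((ball 0 r \ {0}) ×ˢ Icc 0 1) :=
    hB.continuousOn.comp continuousOn_fst fun q hq => hq.1.1
  simp only [AffineMap.lineMap_apply_module']
  fun_prop

lemma comp_lineMap_one {u : ℂ} (hu : u ∈ ball (0 : ℂ) r \ {0}) :
    D.ψ (AffineMap.lineMap u (D.G u) (1 : ℝ)) = f (D.ψ u) := by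
  rw [AffineMap.lineMap_apply_one, hB.conj u hu]

lemma lineMap_eq_of_mem_fixPts {u : ℂ} (hu : u ∈ ball (0 : ℂ) r \ {0})
    (hfix : D.ψ u ∈ FixPts f) (τ : ℝ) : AffineMap.lineMap u (D.G u) τ = u := by
  have hG : D.G u ≠ 0 := by
    simpa using hB.lineMap_ne_zero hu (right_mem_Icc.2 zero_le_one)
  rw [D.injOn hG hu.2 ((hB.conj u hu).trans hfix), AffineMap.lineMap_same_apply]

lemma angVar_eq_of_mem_fixPts {u v : ℂ} (hu : u ∈ ball (0 : ℂ) r \ {0})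
    (hv : v ∈ ball (0 : ℂ) r \ {0}) (hfu : D.ψ u ∈ FixPts f) (hfv : D.ψ v ∈ FixPts f) :
    angVar (fun t => I.F t (D.ψ u) - p) = angVar fun t => I.F t (D.ψ v) - p := by
  have hS : IsPreconnected (ball (0 : ℂ) r \ {0}) := isPreconnected_ball_sdiff_of_countable
    (by simp [Complex.rank_real_complex]) 0 hB.pos (countable_singleton 0)
  have hI : IsPuncturedFamily (ball (0 : ℂ) r \ {0}) fun u t => I.F t (D.ψ u) - p :=
    ⟨(I.continuousOn_apply_comp (D.continuousOn.mono fun u hu => hu.2)).sub continuousOn_const,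
      fun u hu t ht => sub_ne_zero.2 (hB.apply_ne u hu t ht)⟩
  have hG : IsPuncturedFamily (ball (0 : ℂ) r \ {0})
      fun u t => D.ψ (AffineMap.lineMap u (D.G u) t) - p :=
    ⟨hB.continuousOn_comp_lineMap.sub continuousOn_const,
      fun u hu t ht => sub_ne_zero.2 (D.apply_ne (hB.lineMap_ne_zero hu ht))⟩
  have hconst : ∀ w ∈ ball (0 : ℂ) r \ {0}, D.ψ w ∈ FixPts f →
      angVar (fun t => D.ψ (AffineMap.lineMap w (D.G w) t) - p) = 0 := fun w hw hfw => by
    simp only [hB.lineMap_eq_of_mem_fixPts hw hfw]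
    exact angVar_const (sub_ne_zero.2 (D.apply_ne hw.2))
  have hsub := hI.angVar_sub_eq_of_isPreconnected hG hS
    (fun w _ => by simp only [I.apply_zero, AffineMap.lineMap_apply_zero])
    (fun w hw => by simp only [I.apply_one, hB.comp_lineMap_one hw]) hu hv
  rwa [hconst u hu hfu, hconst v hv hfv, sub_zero, sub_zero] at hsub

lemma enlace_eq_of_mem_fixPts {q q' : ℂ × ℂ} (hq : q ∈ (ball (0 : ℂ) r \ {0}).offDiag)
    (hq' : q' ∈ (ball (0 : ℂ) r \ {0}).offDiag) (hf₁ : D.ψ q.1 ∈ FixPts f)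
    (hf₂ : D.ψ q.2 ∈ FixPts f) (hf₁' : D.ψ q'.1 ∈ FixPts f) (hf₂' : D.ψ q'.2 ∈ FixPts f) :
    Enlace I (D.ψ q.1) (D.ψ q.2) = Enlace I (D.ψ q'.1) (D.ψ q'.2) := by
  set S := ball (0 : ℂ) r \ {0}
  have hS : IsPreconnected S.offDiag := isPreconnected_offDiag_ball_sdiff_singleton
    (by simp [Complex.rank_real_complex]) 0 hB.pos
  have hψ : ContinuousOn D.ψ S := D.continuousOn.mono fun u hu => hu.2
  have hI : IsPuncturedFamily S.offDiag fun q t => I.F t (D.ψ q.1) - I.F t (D.ψ q.2) :=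
    ⟨(I.continuousOn_apply_comp (hψ.comp continuousOn_fst fun q hq => hq.1)).sub
      (I.continuousOn_apply_comp (hψ.comp continuousOn_snd fun q hq => hq.2.1)),
      fun q hq t _ => sub_ne_zero.2
        ((I.F t).injective.ne (D.injOn.ne hq.1.2 hq.2.1.2 hq.2.2))⟩
  have hG : IsPuncturedFamily S.offDiag fun q t =>
      D.ψ (AffineMap.lineMap q.1 (D.G q.1) t) - D.ψ (AffineMap.lineMap q.2 (D.G q.2) t) :=
    ⟨(hB.continuousOn_comp_lineMap.comp (f := fun q : (ℂ × ℂ) × ℝ => (q.1.1, q.2)) (by fun_prop)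
        fun q hq => ⟨hq.1.1, hq.2⟩).sub
      (hB.continuousOn_comp_lineMap.comp (f := fun q : (ℂ × ℂ) × ℝ => (q.1.2, q.2)) (by fun_prop)
        fun q hq => ⟨hq.1.2.1, hq.2⟩),
      fun q hq t ht => sub_ne_zero.2 (D.injOn.ne (hB.lineMap_ne_zero hq.1 ht)
        (hB.lineMap_ne_zero hq.2.1 ht) ((hB.injOn t ht).ne hq.1.1 hq.2.1.1 hq.2.2))⟩
  have hconst : ∀ w ∈ S.offDiag, D.ψ w.1 ∈ FixPts f → D.ψ w.2 ∈ FixPts f →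
      angVar (fun t => D.ψ (AffineMap.lineMap w.1 (D.G w.1) t) -
        D.ψ (AffineMap.lineMap w.2 (D.G w.2) t)) = 0 := fun w hw hw₁ hw₂ => by
    simp only [hB.lineMap_eq_of_mem_fixPts hw.1 hw₁, hB.lineMap_eq_of_mem_fixPts hw.2.1 hw₂]
    exact angVar_const (sub_ne_zero.2 (D.injOn.ne hw.1.2 hw.2.1.2 hw.2.2))
  have hsub := hI.angVar_sub_eq_of_isPreconnected hG hS
    (fun w _ => by simp only [I.apply_zero, AffineMap.lineMap_apply_zero])
    (fun w hw => by simp only [I.apply_one, hB.comp_lineMap_one hw.1, hB.comp_lineMap_one hw.2.1])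
    hq hq'
  rwa [hconst q hq hf₁ hf₂, hconst q' hq' hf₁' hf₂', sub_zero, sub_zero] at hsub

end IsInterpolationBall

include D

lemma eventually_notMem_fixPts_or_exists_isInterpolationBall
    (hav : ∀ᶠ z in l, ∀ t ∈ Icc (0 : ℝ) 1, I.F t z ≠ p) :
    (∀ᶠ z in l, z ∉ FixPts f) ∨
      ∃ (D' : PuncturedC1Chart f l p) (r : ℝ), D'.IsInterpolationBall I r := by
  by_cases hA : ∀ v, D.A v = v → v = 0
  · exact .inl (D.eventually_notMem_fixPts hA)
  · push Not at hA
    obtain ⟨v, hv, hv0⟩ := hA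
    exact .inr ⟨D.rescale hv0,
      (D.rescale hv0).exists_isInterpolationBall (D.rescale_A_one hv0 hv) hav⟩

lemma exists_eventually_angVar_eq (hav : ∀ᶠ z in l, ∀ t ∈ Icc (0 : ℝ) 1, I.F t z ≠ p) :
    ∃ N, ∀ᶠ z in l, z ∈ FixPts f → angVar (fun t => I.F t z - p) = N := by
  obtain hfree | ⟨D', r, hB⟩ := D.eventually_notMem_fixPts_or_exists_isInterpolationBall hav
  · exact ⟨0, hfree.mono fun z hz hfix => (hz hfix).elim⟩
  obtain ⟨N, hN⟩ := exists_forall_eq_of_forall_forall_eq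
    (s := {u | u ∈ ball (0 : ℂ) r \ {0} ∧ D'.ψ u ∈ FixPts f})
    fun u hu v hv => hB.angVar_eq_of_mem_fixPts hu.1 hv.1 hu.2 hv.2
  refine ⟨N, ?_⟩
  rw [← D'.map_nhdsNE, eventually_map]
  exact hB.eventually_mem.mono fun u hu hfix => hN u ⟨hu, hfix⟩

lemma exists_eventually_enlace_eq (hav : ∀ᶠ z in l, ∀ t ∈ Icc (0 : ℝ) 1, I.F t z ≠ p) :
    ∃ M, ∀ᶠ q in l ×ˢ l, q ∈ (FixPts f).offDiag → Enlace I q.1 q.2 = M := by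
  obtain hfree | ⟨D', r, hB⟩ := D.eventually_notMem_fixPts_or_exists_isInterpolationBall hav
  · exact ⟨0, hfree.prod_inl l |>.mono fun q hq hfix => (hq hfix.1).elim⟩
  obtain ⟨M, hM⟩ := exists_forall_eq_of_forall_forall_eq
    (s := {q | q ∈ (ball (0 : ℂ) r \ {0}).offDiag ∧ D'.ψ q.1 ∈ FixPts f ∧ D'.ψ q.2 ∈ FixPts f})
    fun q hq q' hq' =>
      hB.enlace_eq_of_mem_fixPts hq.1 hq'.1 hq.2.1 hq.2.2 hq'.2.1 hq'.2.2
  refine ⟨M, ?_⟩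
  rw [← D'.map_nhdsNE, prod_map_map_eq, eventually_map]
  filter_upwards [hB.eventually_mem.prod_mk hB.eventually_mem] with q hq hfix
  exact hM q ⟨⟨hq.1, hq.2, fun h => hfix.2.2 (congrArg D'.ψ h)⟩, hfix.1, hfix.2.1⟩

end PuncturedC1Chart

lemma injective_of_eventually_leftInverse {𝕜 E F : Type*} [NontriviallyNormedField 𝕜]
    [NormedAddCommGroup E] [NormedSpace 𝕜 E] [NormedAddCommGroup F] [NormedSpace 𝕜 F]
    {g : E → F} {g' : F → E} {A : E →L[𝕜] F} {A' : F →L[𝕜] E} {x : E} (hg : HasFDerivAt g A x)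
    (hg' : HasFDerivAt g' A' (g x)) (hinv : ∀ᶠ y in 𝓝 x, g' (g y) = y) :
    Function.Injective A := by
  have hcomp : A'.comp A = ContinuousLinearMap.id 𝕜 E :=
    ((hg'.comp x hg).congr_of_eventuallyEq
      (hinv.mono fun _ hy => hy.symm)).unique (hasFDerivAt_id x)
  exact Function.LeftInverse.injective (g := A') fun v => DFunLike.congr_fun hcomp v

lemma injective_of_hasFDerivAt_conj {X 𝕜 E : Type*} [TopologicalSpace X]
    [NontriviallyNormedField 𝕜] [NormedAddCommGroup E] [NormedSpace 𝕜 E]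
    (κ : OpenPartialHomeomorph X E) {g g' : X → X} {A A' : E →L[𝕜] E} {w : X} (hw : w ∈ κ.source)
    (hg : ContinuousAt g w) (hgw : g w = w) (hleft : Function.LeftInverse g' g)
    (hA : HasFDerivAt (κ ∘ g ∘ κ.symm) A (κ w)) (hA' : HasFDerivAt (κ ∘ g' ∘ κ.symm) A' (κ w)) :
    Function.Injective A := by
  have hsymm : Tendsto (fun u => g (κ.symm u)) (𝓝 (κ w)) (𝓝 w) := by
    have hg' : Tendsto g (𝓝 w) (𝓝 w) := by simpa only [ContinuousAt, hgw] using hg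
    exact hg'.comp (κ.tendsto_symm hw)
  refine injective_of_eventually_leftInverse hA (by simpa [κ.left_inv hw, hgw] using hA') ?_
  filter_upwards [hsymm (κ.open_source.mem_nhds hw), κ.open_target.mem_nhds (κ.map_source hw)]
    with u hu hu_target
  simp only [Function.comp_apply, κ.left_inv hu, hleft (κ.symm u), κ.right_inv hu_target]

section SphereChart

open Manifold

/-- Instance search does not see `3` as `2 + 1`, the form in which Mathlib's sphere API asks for the
dimension. -/
instance fact_finrank_euclideanSpace_eq_two_add_one :
    Fact (Module.finrank ℝ (EuclideanSpace ℝ (Fin 3)) = 2 + 1) :=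
  ⟨finrank_euclideanSpace_fin⟩

/-- Stereographic projection of the sphere from `n`, read in the complex plane and translated so
that `w` goes to the origin. -/
def stereographicChart (n w : 𝕊²) : OpenPartialHomeomorph 𝕊² ℂ :=
  ((stereographic' 2 n).transHomeomorph
    Complex.orthonormalBasisOneI.repr.toContinuousLinearEquiv.symm.toHomeomorph).transHomeomorph
      (Homeomorph.subRight (Complex.orthonormalBasisOneI.repr.symm (stereographic' 2 n w)))

variable {n w : 𝕊²}

lemma stereographicChart_source : (stereographicChart n w).source = {n}ᶜ := by
  simp [stereographicChart]

lemma stereographicChart_target : (stereographicChart n w).target = univ := by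
  simp [stereographicChart]

lemma stereographicChart_self : stereographicChart n w w = 0 := by
  simp [stereographicChart]

lemma contDiffAt_stereographicChart_conj (hw : w ≠ n) {g : 𝕊² → 𝕊²}
    (hg : ContMDiff (𝓡 2) (𝓡 2) 1 g) (hgw : g w = w) :
    ContDiffAt ℝ 1 (stereographicChart n w ∘ g ∘ (stereographicChart n w).symm) 0 := by
  let σ := stereographic' 2 n
  let ι := Complex.orthonormalBasisOneI.repr.toContinuousLinearEquiv
  have hσ : σ ∈ IsManifold.maximalAtlas (𝓡 2) 1 𝕊² := IsManifold.subset_maximalAtlas ⟨n, rfl⟩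
  have hwσ : w ∈ σ.source := by simpa [σ] using hw
  have hσgσ : ContDiffAt ℝ 1 (σ ∘ g ∘ σ.symm) (σ w) := by
    simpa [contDiffWithinAt_univ] using
      ((contMDiffAt_iff_of_mem_maximalAtlas hσ hσ hwσ (by rwa [hgw])).1 (hg w)).2
  have htrans : ContDiffAt ℝ 1 (fun u : ℂ => ι (u + ι.symm (σ w))) 0 := by fun_prop
  have hright : ContDiffAt ℝ 1 ((σ ∘ g ∘ σ.symm) ∘ fun u => ι (u + ι.symm (σ w))) 0 :=
    ContDiffAt.comp 0 (by simpa using hσgσ) htrans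
  exact (ι.symm.contDiff.contDiffAt.comp (0 : ℂ) hright).sub contDiffAt_const

lemma IsC1SphereDiffeo.exists_chart {g : 𝕊² → 𝕊²} (hg : IsC1SphereDiffeo g) (hw : w ≠ n)
    (hgw : g w = w) :
    ∃ κ : OpenPartialHomeomorph 𝕊² ℂ, κ.source = {n}ᶜ ∧ κ.target = univ ∧ κ w = 0 ∧
      ∃ A : ℂ →L[ℝ] ℂ, HasStrictFDerivAt (κ ∘ g ∘ κ.symm) A 0 ∧ Function.Injective A := by
  obtain ⟨-, hgC, g', hleft, -, hgC'⟩ := hg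
  have hG := (contDiffAt_stereographicChart_conj hw hgC hgw).hasStrictFDerivAt one_ne_zero
  have hG' := (contDiffAt_stereographicChart_conj hw hgC'
    (by rw [← hgw, hleft, hgw])).hasStrictFDerivAt one_ne_zero
  refine ⟨stereographicChart n w, stereographicChart_source, stereographicChart_target,
    stereographicChart_self, _, hG, ?_⟩
  refine injective_of_hasFDerivAt_conj (stereographicChart n w) (w := w)
    (by rwa [stereographicChart_source]) hgC.continuous.continuousAt hgw hleft
    (A' := fderiv ℝ (stereographicChart n w ∘ g' ∘ (stereographicChart n w).symm) 0) ?_ ?_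
  · rw [stereographicChart_self]
    exact hG.hasFDerivAt
  · rw [stereographicChart_self]
    exact hG'.hasFDerivAt

end SphereChart

section CenteredC1Chart

open OnePoint

/-- A chart of the sphere `OnePoint ℂ` omitting only `a`, centred at a fixed point `b` of the
extension of `f`, in which this extension has an invertible strict derivative at the origin. -/
structure CenteredC1Chart (f : ℂ ≃ₜ ℂ) (a b : OnePoint ℂ) where
  κ : OpenPartialHomeomorph (OnePoint ℂ) ℂ
  source_eq : κ.source = {a}ᶜ
  target_eq : κ.target = univ
  ne : b ≠ a
  map_eq : OnePoint.map f b = b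
  map_center : κ b = 0
  A : ℂ →L[ℝ] ℂ
  hasStrictFDerivAt : HasStrictFDerivAt (κ ∘ OnePoint.map f ∘ κ.symm) A 0
  injective : Function.Injective A

variable {f : ℂ ≃ₜ ℂ} {a b : OnePoint ℂ}

lemma ExtendsToC1SphereDiffeo.nonempty_centeredC1Chart (hf : ExtendsToC1SphereDiffeo f)
    (hba : b ≠ a) (hb : OnePoint.map f b = b) : Nonempty (CenteredC1Chart f a b) := by
  obtain ⟨φ, hφ⟩ := hf
  obtain ⟨κ, hsource, htarget, hκb, A, hA, hA_inj⟩ :=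
    hφ.exists_chart (φ.injective.ne hba) (by simp [hb])
  exact ⟨φ.toOpenPartialHomeomorph.trans κ, by ext x; simp [hsource], by simp [htarget], hba, hb,
    by simpa using hκb, A, by simpa [Function.comp_def] using hA, hA_inj⟩

namespace CenteredC1Chart

variable (D : CenteredC1Chart f a b)

lemma mem_source : b ∈ D.κ.source :=
  D.source_eq ▸ D.ne

lemma mem_target (u : ℂ) : u ∈ D.κ.target :=
  D.target_eq ▸ mem_univ u

lemma symm_zero : D.κ.symm 0 = b := by
  rw [← D.map_center, D.κ.left_inv D.mem_source]

lemma symm_eq_iff {u : ℂ} : D.κ.symm u = b ↔ u = 0 :=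
  ⟨fun h => by simpa [D.map_center, D.κ.right_inv (D.mem_target u)] using congrArg D.κ h,
    fun h => h ▸ D.symm_zero⟩

lemma map_symm_eq_iff {u : ℂ} : OnePoint.map f (D.κ.symm u) = b ↔ u = 0 :=
  ⟨fun h => D.symm_eq_iff.1 (f.onePointCongr.injective (h.trans D.map_eq.symm)),
    fun h => by rw [h, D.symm_zero, D.map_eq]⟩

lemma eq_zero_iff {x : OnePoint ℂ} (hx : x ≠ a) : D.κ x = 0 ↔ x = b := by
  rw [← D.map_center, D.κ.injOn.eq_iff (D.source_eq ▸ hx) D.mem_source]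

lemma symm_ne (u : ℂ) : D.κ.symm u ≠ a := by
  simpa [D.source_eq] using D.κ.map_target (D.mem_target u)

lemma map_symm_nhdsNE : map D.κ.symm (𝓝[≠] 0) = 𝓝[≠] b := by
  have hpre : D.κ.symm ⁻¹' {b}ᶜ = {0}ᶜ := by
    ext u
    simp [D.symm_eq_iff]
  rw [← hpre, D.κ.symm.map_nhdsWithin_preimage_eq (D.mem_target 0), D.symm_zero]

lemma eventually_map_symm_ne : ∀ᶠ u in 𝓝 0, OnePoint.map f (D.κ.symm u) ≠ a := by
  have hcont : ContinuousAt (OnePoint.map f ∘ D.κ.symm) 0 :=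
    f.onePointCongr.continuous.continuousAt.comp (D.κ.continuousAt_symm (D.mem_target 0))
  exact hcont.eventually_ne (by simpa [D.symm_zero, D.map_eq] using D.ne)

/-- The inverse of the chart, as a map from the punctured coordinate plane to the plane. -/
def puncturedParam : OpenPartialHomeomorph ℂ ℂ :=
  ((isOpenEmbedding_coe.toOpenPartialHomeomorph _).trans D.κ).symm.restr {0}ᶜ

variable {p : ℂ} (hp : ∀ x : OnePoint ℂ, x = a ∨ x = b ↔ x = ∞ ∨ x = p)

include hp

lemma symm_ne_infty {u : ℂ} (hu : u ≠ 0) : D.κ.symm u ≠ ∞ := fun h =>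
  ((hp _).2 (.inl h)).elim (D.symm_ne u) fun h => hu (D.symm_eq_iff.1 h)

lemma puncturedParam_source : D.puncturedParam.source = {0}ᶜ := by
  have hrange : ∀ u : ℂ, u ≠ 0 → ∃ z : ℂ, ↑z = D.κ.symm u := fun u hu =>
    OnePoint.ne_infty_iff_exists.1 (D.symm_ne_infty hp hu)
  ext u
  simpa [puncturedParam, D.target_eq] using hrange u

lemma puncturedParam_target : D.puncturedParam.target = {p}ᶜ := by
  ext z
  have hz : (↑z = a ∨ ↑z = b) ↔ z = p := by simpa using hp z
  by_cases hza : ↑z = a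
  · simp [puncturedParam, D.source_eq, hza, ← hz]
  · simp [puncturedParam, D.source_eq, hza, ← hz, D.eq_zero_iff hza]

lemma coe_puncturedParam {u : ℂ} (hu : u ≠ 0) :
    (D.puncturedParam u : OnePoint ℂ) = D.κ.symm u :=
  (isOpenEmbedding_coe.toOpenPartialHomeomorph _).right_inv
    (by simpa using OnePoint.ne_infty_iff_exists.1 (D.symm_ne_infty hp hu))

lemma map_puncturedParam_nhdsNE : map D.puncturedParam (𝓝[≠] 0) = comap (↑) (𝓝[≠] b) := by
  have hcoe : map ((↑) ∘ D.puncturedParam) (𝓝[≠] 0) = 𝓝[≠] b := by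
    rw [← D.map_symm_nhdsNE]
    exact map_congr (eventually_mem_nhdsWithin.mono fun u hu => D.coe_puncturedParam hp hu)
  rw [← hcoe, ← map_map, comap_map OnePoint.coe_injective]

/-- The chart read on the punctured plane. -/
def puncturedC1Chart : PuncturedC1Chart f (comap (↑) (𝓝[≠] b)) p where
  ψ := D.puncturedParam
  source_eq := D.puncturedParam_source hp
  target_eq := D.puncturedParam_target hp
  map_nhdsNE := D.map_puncturedParam_nhdsNE hp
  G := D.κ ∘ OnePoint.map f ∘ D.κ.symm
  A := D.A
  hasStrictFDerivAt := D.hasStrictFDerivAt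
  map_zero := by simp [D.symm_zero, D.map_eq, D.map_center]
  injective := D.injective
  conj := by
    filter_upwards [mem_nhdsWithin_of_mem_nhds D.eventually_map_symm_ne, self_mem_nhdsWithin]
      with u hfu hu
    have hG : D.κ (OnePoint.map f (D.κ.symm u)) ≠ 0 := by
      rwa [Ne, D.eq_zero_iff hfu, D.map_symm_eq_iff]
    apply OnePoint.coe_injective
    calc (D.puncturedParam (D.κ (OnePoint.map f (D.κ.symm u))) : OnePoint ℂ)
        = OnePoint.map f (D.κ.symm u) := by
          rw [D.coe_puncturedParam hp hG, D.κ.left_inv (D.source_eq ▸ hfu)]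
      _ = f (D.puncturedParam u) := by
          rw [← D.coe_puncturedParam hp hu, OnePoint.map_some]

end CenteredC1Chart

lemma comap_coe_nhdsNE_infty : comap (↑) (𝓝[≠] (∞ : OnePoint ℂ)) = cocompact ℂ := by
  rw [nhdsNE_infty_eq, comap_map OnePoint.coe_injective, coclosedCompact_eq_cocompact]

lemma comap_coe_nhdsNE_coe (z : ℂ) : comap (↑) (𝓝[≠] (z : OnePoint ℂ)) = 𝓝[≠] z := by
  have hpre : ((↑) : ℂ → OnePoint ℂ) ⁻¹' {↑z}ᶜ = {z}ᶜ := by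
    ext w
    simp
  rw [nhdsWithin_coe, comap_map OnePoint.coe_injective, hpre]

lemma ExtendsToC1SphereDiffeo.nonempty_puncturedC1Chart_cocompact
    (hf : ExtendsToC1SphereDiffeo f) : Nonempty (PuncturedC1Chart f (cocompact ℂ) 0) := by
  obtain ⟨D⟩ := hf.nonempty_centeredC1Chart (infty_ne_coe 0) (OnePoint.map_infty f)
  rw [← comap_coe_nhdsNE_infty]
  exact ⟨D.puncturedC1Chart fun _ => or_comm⟩

lemma ExtendsToC1SphereDiffeo.nonempty_puncturedC1Chart_nhdsNE (hf : ExtendsToC1SphereDiffeo f)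
    {z₀ : ℂ} (hz₀ : f z₀ = z₀) : Nonempty (PuncturedC1Chart f (𝓝[≠] z₀) z₀) := by
  obtain ⟨D⟩ := hf.nonempty_centeredC1Chart (coe_ne_infty z₀) (by rw [OnePoint.map_some, hz₀])
  rw [← comap_coe_nhdsNE_coe]
  exact ⟨D.puncturedC1Chart fun _ => Iff.rfl⟩

end CenteredC1Chart

lemma exists_forall_le_of_eventually_comap_nhds {X α β : Type*} [TopologicalSpace X]
    [CompactSpace X] [LinearOrder β] [Nonempty β] {ι : α → X} {s : Set α} {g : α → β}
    (h : ∀ x, ∃ M, ∀ᶠ a in comap ι (𝓝 x), a ∈ s → g a ≤ M) : ∃ M, ∀ a ∈ s, g a ≤ M := by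
  suffices ∃ M, ∀ a, ι a ∈ univ → a ∈ s → g a ≤ M by simpa using this
  refine isCompact_univ.induction_on (p := fun t => ∃ M, ∀ a, ι a ∈ t → a ∈ s → g a ≤ M)
    ⟨Classical.arbitrary β, by simp⟩ (fun t t' htt' => Exists.imp fun M hM a ha => hM a (htt' ha))
    ?_ fun x _ => ?_
  · rintro t t' ⟨M, hM⟩ ⟨M', hM'⟩
    refine ⟨max M M', fun a ha has => ha.elim (fun ha => ?_) fun ha => ?_⟩
    · exact (hM a ha has).trans (le_max_left M M')
    · exact (hM' a ha has).trans (le_max_right M M')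
  · obtain ⟨M, hM⟩ := h x
    obtain ⟨t, ht, htM⟩ := mem_comap.1 hM
    exact ⟨t, mem_nhdsWithin_of_mem_nhds ht, M, fun a ha => htM ha⟩

namespace HIsotopy

variable {f : ℂ ≃ₜ ℂ} (I : HIsotopy f)

lemma isPuncturedPath_sub {z z' : ℂ} (hne : z ≠ z') :
    IsPuncturedPath fun t => I.F t z - I.F t z' :=
  I.isPuncturedFamily_sub.isPuncturedPath (x := (z, z')) hne

lemma enlace_comm {z z' : ℂ} (hne : z ≠ z') : Enlace I z z' = Enlace I z' z := by
  simpa only [Enlace, neg_sub] using (angVar_neg (I.isPuncturedPath_sub hne)).symm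

lemma eventually_cocompact_lt_norm (R : ℝ) :
    ∀ᶠ z in cocompact ℂ, ∀ t ∈ Icc (0 : ℝ) 1, R < ‖I.F t z‖ := by
  have hK : IsCompact ((fun p : ℝ × ℂ => (I.F p.1).symm p.2) '' (Icc 0 1 ×ˢ closedBall 0 R)) :=
    (isCompact_Icc.prod (isCompact_closedBall 0 R)).image I.cont_symm
  filter_upwards [hK.compl_mem_cocompact] with z hz t ht
  by_contra! hle
  exact hz ⟨(t, I.F t z), ⟨ht, by simpa using hle⟩, by simp⟩

lemma eventually_cocompact_ne_zero :
    ∀ᶠ z in cocompact ℂ, ∀ t ∈ Icc (0 : ℝ) 1, I.F t z ≠ 0 :=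
  (I.eventually_cocompact_lt_norm 0).mono fun _ hz t ht => norm_pos_iff.1 (hz t ht)

lemma eventually_cocompact_prod_nhds_norm_lt (y : ℂ) :
    ∀ᶠ q in cocompact ℂ ×ˢ 𝓝 y, ∀ t ∈ Icc (0 : ℝ) 1, ‖I.F t q.2‖ < ‖I.F t q.1‖ := by
  obtain ⟨R, hR⟩ := ((isCompact_Icc (a := (0 : ℝ)) (b := 1)).prod
    (isCompact_closedBall y 1)).exists_bound_of_continuousOn I.cont.continuousOn
  filter_upwards [(I.eventually_cocompact_lt_norm R).prod_mk (closedBall_mem_nhds y one_pos)]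
    with q hq t ht
  exact (hR (t, q.2) ⟨ht, hq.2⟩).trans_lt (hq.1 t ht)

lemma enlace_eq_tourne {z z' : ℂ} (hz : z ∈ FixPts f) (hz' : z' ∈ FixPts f)
    (hlt : ∀ t ∈ Icc (0 : ℝ) 1, ‖I.F t z'‖ < ‖I.F t z‖) : Enlace I z z' = Tourne I z := by
  have hne : ∀ t ∈ Icc (0 : ℝ) 1, I.F t z ≠ 0 := fun t ht =>
    norm_pos_iff.1 ((norm_nonneg _).trans_lt (hlt t ht))
  have hzz' : z ≠ z' := fun h => (hlt 0 (by simp)).ne (by rw [h])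
  refine angVar_eq_of_div_mem_slitPlane (I.isPuncturedPath_sub hzz')
    ⟨(I.cont.comp (continuous_id.prodMk continuous_const)).continuousOn, hne⟩ (fun t ht => ?_) ?_
  · rw [sub_div, div_self (hne t ht), sub_eq_add_neg]
    refine Complex.mem_slitPlane_of_norm_lt_one ?_
    rw [norm_neg, norm_div]
    exact (div_lt_one (norm_pos_iff.2 (hne t ht))).2 (hlt t ht)
  · rw [I.apply_zero, I.apply_zero, I.apply_one, I.apply_one, hz, hz']

/-- The linking numbers of pairs of distinct fixed points are bounded along the filter `L`. -/
def EnlaceBoundedAlong (L : Filter (ℂ × ℂ)) : Prop :=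
  ∃ M, ∀ᶠ q in L, q ∈ (FixPts f).offDiag → |Enlace I q.1 q.2| ≤ M

variable {I}

lemma EnlaceBoundedAlong.sup {L L' : Filter (ℂ × ℂ)} (h : I.EnlaceBoundedAlong L)
    (h' : I.EnlaceBoundedAlong L') : I.EnlaceBoundedAlong (L ⊔ L') := by
  obtain ⟨M, hM⟩ := h
  obtain ⟨M', hM'⟩ := h'
  exact ⟨max M M', eventually_sup.2
    ⟨hM.mono fun q hq hfix => (hq hfix).trans (le_max_left M M'),
      hM'.mono fun q hq hfix => (hq hfix).trans (le_max_right M M')⟩⟩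

lemma EnlaceBoundedAlong.swap {l l' : Filter ℂ} (h : I.EnlaceBoundedAlong (l ×ˢ l')) :
    I.EnlaceBoundedAlong (l' ×ˢ l) := by
  obtain ⟨M, hM⟩ := h
  refine ⟨M, ?_⟩
  rw [prod_comm, eventually_map]
  filter_upwards [hM] with q hq hfix
  rw [I.enlace_comm hfix.2.2]
  exact hq ⟨hfix.2.1, hfix.1, hfix.2.2.symm⟩

lemma enlaceBoundedAlong_nhds_prod {x : ℂ} (hx : x ∉ FixPts f) (l : Filter ℂ) :
    I.EnlaceBoundedAlong (𝓝 x ×ˢ l) :=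
  have hfree : ∀ᶠ z in 𝓝 x, z ∉ FixPts f :=
    (isClosed_eq f.continuous continuous_id).isOpen_compl.mem_nhds hx
  ⟨0, (hfree.prod_inl l).mono fun _ hq hfix => (hq hfix.1).elim⟩

lemma enlaceBoundedAlong_nhds_prod_nhds_of_ne {x y : ℂ} (hxy : x ≠ y) (hx : x ∈ FixPts f)
    (hy : y ∈ FixPts f) : I.EnlaceBoundedAlong (𝓝 x ×ˢ 𝓝 y) := by
  have hfamily : IsPuncturedFamily (FixPts f).offDiag fun q t => I.F t q.1 - I.F t q.2 :=
    I.isPuncturedFamily_sub.mono fun q hq => hq.2.2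
  have hconst := hfamily.eventually_angVar_eq (x := (x, y)) (fun q hq => by
    rw [I.apply_zero, I.apply_zero, I.apply_one, I.apply_one, hq.1, hq.2.1]) ⟨hx, hy, hxy⟩
  rw [eventually_nhdsWithin_iff, nhds_prod_eq] at hconst
  exact ⟨|Enlace I x y|, hconst.mono fun q hq hfix => (congrArg abs (hq hfix)).le⟩

lemma enlaceBoundedAlong_nhds_prod_self (hext : ExtendsToC1SphereDiffeo f) {z₀ : ℂ}
    (hz₀ : f z₀ = z₀) : I.EnlaceBoundedAlong (𝓝 z₀ ×ˢ 𝓝 z₀) := by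
  obtain ⟨D⟩ := hext.nonempty_puncturedC1Chart_nhdsNE hz₀
  have hav : ∀ᶠ z in 𝓝[≠] z₀, ∀ t ∈ Icc (0 : ℝ) 1, (I.recenter hz₀).F t z ≠ z₀ := by
    filter_upwards [self_mem_nhdsWithin] with z hz t _
    have hfix : (I.recenter hz₀).F t z₀ = z₀ := add_sub_cancel _ _
    exact fun h => hz (((I.recenter hz₀).F t).injective (h.trans hfix.symm))
  obtain ⟨N, hN⟩ := D.exists_eventually_angVar_eq hav
  obtain ⟨M, hM⟩ := D.exists_eventually_enlace_eq hav
  simp only [angVar_recenter_sub, enlace_recenter] at hN hM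
  have hne : I.EnlaceBoundedAlong (𝓝[≠] z₀ ×ˢ 𝓝[≠] z₀) :=
    ⟨|M|, hM.mono fun q hq hfix => (congrArg abs (hq hfix)).le⟩
  have hpure : I.EnlaceBoundedAlong (𝓝[≠] z₀ ×ˢ pure z₀) := by
    refine ⟨|N|, ?_⟩
    rw [prod_pure, eventually_map]
    exact hN.mono fun z hz hfix => (congrArg abs (hz hfix.1)).le
  have hdiag : I.EnlaceBoundedAlong (pure z₀ ×ˢ pure z₀) :=
    ⟨0, by simp⟩
  rw [← nhdsNE_sup_pure, sup_prod, prod_sup, prod_sup]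
  exact (hne.sup hpure).sup (hpure.swap.sup hdiag)

lemma enlaceBoundedAlong_nhds_prod_nhds (hext : ExtendsToC1SphereDiffeo f) (x y : ℂ) :
    I.EnlaceBoundedAlong (𝓝 x ×ˢ 𝓝 y) := by
  by_cases hx : x ∈ FixPts f
  · by_cases hy : y ∈ FixPts f
    · obtain rfl | hxy := eq_or_ne x y
      · exact enlaceBoundedAlong_nhds_prod_self hext hx
      · exact enlaceBoundedAlong_nhds_prod_nhds_of_ne hxy hx hy
    · exact (enlaceBoundedAlong_nhds_prod hy (𝓝 x)).swap
  · exact enlaceBoundedAlong_nhds_prod hx (𝓝 y)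

variable (I)

lemma exists_eventually_cocompact_tourne_eq (hext : ExtendsToC1SphereDiffeo f) :
    ∃ N, ∀ᶠ z in cocompact ℂ, z ∈ FixPts f → Tourne I z = N := by
  obtain ⟨D⟩ := hext.nonempty_puncturedC1Chart_cocompact
  simpa only [Tourne, sub_zero] using D.exists_eventually_angVar_eq I.eventually_cocompact_ne_zero

variable {I}

lemma enlaceBoundedAlong_cocompact_prod_self (hext : ExtendsToC1SphereDiffeo f) :
    I.EnlaceBoundedAlong (cocompact ℂ ×ˢ cocompact ℂ) := by
  obtain ⟨D⟩ := hext.nonempty_puncturedC1Chart_cocompact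
  obtain ⟨M, hM⟩ := D.exists_eventually_enlace_eq I.eventually_cocompact_ne_zero
  exact ⟨|M|, hM.mono fun q hq hfix => (congrArg abs (hq hfix)).le⟩

lemma enlaceBoundedAlong_cocompact_prod_nhds (hext : ExtendsToC1SphereDiffeo f) (y : ℂ) :
    I.EnlaceBoundedAlong (cocompact ℂ ×ˢ 𝓝 y) := by
  obtain ⟨N, hN⟩ := I.exists_eventually_cocompact_tourne_eq hext
  refine ⟨|N|, ?_⟩
  filter_upwards [hN.prod_inl (𝓝 y), I.eventually_cocompact_prod_nhds_norm_lt y] with q hq hlt hfix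
  rw [I.enlace_eq_tourne hfix.1 hfix.2.1 hlt, hq hfix.1]

lemma enlaceBoundedAlong_comap_coe_nhds (hext : ExtendsToC1SphereDiffeo f) (x y : OnePoint ℂ) :
    I.EnlaceBoundedAlong (comap (↑) (𝓝 x) ×ˢ comap (↑) (𝓝 y)) := by
  induction x using OnePoint.rec <;> induction y using OnePoint.rec <;>
    simp only [OnePoint.comap_coe_nhds, OnePoint.comap_coe_nhds_infty, coclosedCompact_eq_cocompact]
  case infty.infty => exact enlaceBoundedAlong_cocompact_prod_self hext
  case infty.coe y => exact enlaceBoundedAlong_cocompact_prod_nhds hext y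
  case coe.infty x => exact (enlaceBoundedAlong_cocompact_prod_nhds hext x).swap
  case coe.coe x y => exact enlaceBoundedAlong_nhds_prod_nhds hext x y

end HIsotopy

theorem stmt2_extendsC1_implies_P1_P2
    (f : ℂ ≃ₜ ℂ) (hor : Nonempty (HIsotopy f))
    (hext : ExtendsToC1SphereDiffeo f) :
    ∀ I : HIsotopy f, P1 I ∧ P2 I := by
  refine fun I => ⟨?_, ?_⟩
  · have hlocal : ∀ x : OnePoint ℂ × OnePoint ℂ, ∃ M, ∀ᶠ q : ℂ × ℂ in
        comap (fun p => (↑p.1, ↑p.2)) (𝓝 x), q ∈ (FixPts f).offDiag → |Enlace I q.1 q.2| ≤ M := by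
      rintro ⟨x, y⟩
      rw [nhds_prod_eq, ← prod_comap_comap_eq]
      exact HIsotopy.enlaceBoundedAlong_comap_coe_nhds hext x y
    obtain ⟨M, hM⟩ := exists_forall_le_of_eventually_comap_nhds hlocal
    exact ⟨M, fun z hz z' hz' hne => hM (z, z') ⟨hz, hz', hne⟩⟩
  · obtain ⟨N, hN⟩ := I.exists_eventually_cocompact_tourne_eq hext
    obtain ⟨K, hK, hKN⟩ := mem_cocompact.1 hN
    exact ⟨K, hK, fun z hz z' hz' => (hKN hz.2 hz.1).trans (hKN hz'.2 hz'.1).symm⟩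

end
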